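/- arXiv:2508.04439 — 3 statements merged into one kernel-verified Lean document; each statement's English description precedes it below -/
import Mathlib

section
/- Assume ℓ(C) ≥ 3, i.e. at least three of the degrees e_j equal 1. Then the S-module D₀(f) is generated by the set G = {ρ_1, ..., ρ_{m−1}}, and G is a minimal generating set: no ρ_j (1 ≤ j ≤ m−1) lies in the S-submodule of S³ generated by the other m−2 elements of G. In particular C is an (m−1)-syzygy curve with exponents d_1 = ⋯ = d_{m−1} = d−2. -/
open MvPolynomial

noncomputable abbrev S : Type := MvPolynomial (Fin 3) ℂ

/-- The gradient `∇g = (g_x, g_y, g_z)` of a polynomial `g ∈ S = ℂ[x,y,z]`. -/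
noncomputable def grad (g : S) : Fin 3 → S := fun t => pderiv t g

/-- The syzygy triple `ρ_j = Σ_{i≠j} (∏_{k≠i,j} f_k) (∇f_i × ∇f_j)`
of the 2-form `ω_j = df ∧ df_j/f_j`. -/
noncomputable def rho {m : ℕ} (F : Fin m → S) (j : Fin m) : Fin 3 → S :=
  ∑ i ∈ Finset.univ.erase j,
    (∏ k ∈ (Finset.univ.erase j).erase i, F k) • crossProduct (grad (F i)) (grad (F j))

/-- The Jacobian syzygy module `D₀(f) = {(a,b,c) ∈ S³ : a f_x + b f_y + c f_z = 0}`. -/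
noncomputable def D0 (f : S) : Submodule S (Fin 3 → S) where
  carrier := {v | ∑ t, v t * pderiv t f = 0}
  add_mem' {a b} ha hb := by
    simp only [Set.mem_setOf_eq, Pi.add_apply, add_mul, Finset.sum_add_distrib] at *
    rw [ha, hb, add_zero]
  zero_mem' := by simp
  smul_mem' c v hv := by
    simp only [Set.mem_setOf_eq, Pi.smul_apply, smul_eq_mul, mul_assoc, ← Finset.mul_sum] at *
    rw [hv, mul_zero]

/-- The syzygy triple `σ^x = (0, f_z, −f_y)` of the 2-form `df ∧ dx`. -/
noncomputable def sigx (f : S) : Fin 3 → S := ![0, pderiv 2 f, -pderiv 1 f]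
/-- The syzygy triple `σ^y = (−f_z, 0, f_x)` of the 2-form `df ∧ dy`. -/
noncomputable def sigy (f : S) : Fin 3 → S := ![-pderiv 2 f, 0, pderiv 0 f]
/-- The syzygy triple `σ^z = (f_y, −f_x, 0)` of the 2-form `df ∧ dz`. -/
noncomputable def sigz (f : S) : Fin 3 → S := ![pderiv 1 f, -pderiv 0 f, 0]


/-- Nullstellensatz: an ideal with no nonzero zeros contains powers of the variables. -/
lemma X_pow_mem (I : Ideal S) (h : ∀ p : Fin 3 → ℂ, p ≠ 0 → ∃ s ∈ I, eval p s ≠ 0) (t : Fin 3) :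
    ∃ n, (X t : S) ^ n ∈ I := by
  have h1 : (X t : S) ∈ I.radical := by
    rw [← vanishingIdeal_zeroLocus_eq_radical (K := ℂ) I, mem_vanishingIdeal_iff]
    intro x hx
    rw [mem_zeroLocus_iff] at hx
    by_cases hx0 : x = 0
    · simp [hx0]
    · obtain ⟨s, hs, hs'⟩ := h x hx0
      exact absurd (by simpa [aeval_eq_eval] using hx s hs) hs'
  exact h1

lemma one_mem_of_saturated (I : Ideal S)
    (h : ∀ p : Fin 3 → ℂ, p ≠ 0 → ∃ s ∈ I, eval p s ≠ 0)
    (hsat : ∀ s : S, (∀ t, X t * s ∈ I) → s ∈ I) : (1 : S) ∈ I := by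
  obtain ⟨a, ha⟩ := X_pow_mem I h 0
  obtain ⟨b, hb⟩ := X_pow_mem I h 1
  obtain ⟨c, hc⟩ := X_pow_mem I h 2
  have key : ∀ n i j k : ℕ, a + b + c ≤ n + (i + j + k) →
      (X 0 : S) ^ i * X 1 ^ j * X 2 ^ k ∈ I := by
    intro n
    induction n with
    | zero =>
      intro i j k hn
      have : a ≤ i ∨ b ≤ j ∨ c ≤ k := by omega
      rcases this with h | h | h
      · obtain ⟨r, rfl⟩ := Nat.exists_eq_add_of_le h
        rw [pow_add, mul_assoc, mul_assoc]
        exact I.mul_mem_right _ ha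
      · obtain ⟨r, rfl⟩ := Nat.exists_eq_add_of_le h
        rw [pow_add]
        have := I.mul_mem_right (X 0 ^ i * X 1 ^ r * X 2 ^ k) hb
        convert this using 1; ring
      · obtain ⟨r, rfl⟩ := Nat.exists_eq_add_of_le h
        rw [pow_add]
        have := I.mul_mem_right (X 0 ^ i * X 1 ^ j * X 2 ^ r) hc
        convert this using 1; ring
    | succ n ih =>
      intro i j k hn
      apply hsat
      intro t
      fin_cases t
      · convert ih (i+1) j k (by omega) using 1; simp; ring
      · convert ih i (j+1) k (by omega) using 1; simp; ring
      · convert ih i j (k+1) (by omega) using 1; simp; ring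
  simpa using key (a+b+c) 0 0 0 (by omega)

lemma X_relprime : IsRelPrime (X 0 : S) (X 1 : S) := by
  have h : Irreducible (X 0 : S) := (X_prime (R := ℂ) (σ := Fin 3)).irreducible
  rw [h.isRelPrime_iff_not_dvd, X_dvd_X]
  simp

/-- A nonunit polynomial has a nonzero zero. -/
lemma exists_zero_of_not_isUnit (g : S) (hg : ¬ IsUnit g) :
    ∃ p : Fin 3 → ℂ, p ≠ 0 ∧ eval p g = 0 := by
  by_contra hcon
  push Not at hcon
  have h : ∀ p : Fin 3 → ℂ, p ≠ 0 → ∃ s ∈ Ideal.span {g}, eval p s ≠ 0 :=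
    fun p hp => ⟨g, Ideal.mem_span_singleton_self g, hcon p hp⟩
  obtain ⟨a, ha⟩ := X_pow_mem _ h 0
  obtain ⟨b, hb⟩ := X_pow_mem _ h 1
  rw [Ideal.mem_span_singleton] at ha hb
  exact hg ((X_relprime.pow (m := a) (n := b)) ha hb)

lemma dvd_of_dvd_mul_family {ι : Type*} (f g : S) (h : ι → S) (hf : f ≠ 0)
    (hd : ∀ t, f ∣ g * h t) (hu : ∀ δ, δ ∣ f → (∀ t, δ ∣ h t) → IsUnit δ) : f ∣ g := by
  obtain ⟨f', g', c, hrel, rfl, rfl⟩ := UniqueFactorizationMonoid.exists_reduced_factors f hf g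
  have hc : c ≠ 0 := by rintro rfl; simp at hf
  have h1 : ∀ t, f' ∣ h t := by
    intro t
    have := hd t
    rw [mul_assoc, mul_dvd_mul_iff_left hc] at this
    exact hrel.dvd_of_dvd_mul_left this
  have := hu f' (Dvd.intro_left c rfl) h1
  exact mul_dvd_mul_left c (this.dvd)

/-- substitution `x = 0` -/
noncomputable def sub0 : S →ₐ[ℂ] S := aeval ![0, X 1, X 2]

lemma sub0_dvd (k : S) : (X 0 : S) ∣ k - sub0 k := by
  induction k using MvPolynomial.induction_on with
  | C a => simp [sub0]
  | add p q hp hq =>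
    rw [map_add]
    convert dvd_add hp hq using 1; ring
  | mul_X p n hp =>
    rw [map_mul]
    have h1 : (X 0 : S) ∣ X n - sub0 (X n) := by
      fin_cases n <;> simp [sub0]
    have : p * X n - sub0 p * sub0 (X n) = (p - sub0 p) * X n + sub0 p * (X n - sub0 (X n)) := by
      ring
    rw [this]
    exact dvd_add (hp.mul_right _) (h1.mul_left _)

lemma koszul2 (i j : Fin 3) (hij : i ≠ j) (a b : S) (h : (X i : S) * b = X j * a) :
    ∃ w, a = X i * w ∧ b = X j * w := by
  have : (X i : S) ∣ X j * a := ⟨b, h.symm⟩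
  rcases (X_prime (R := ℂ) (σ := Fin 3)).dvd_or_dvd this with h1 | h1
  · rw [X_dvd_X] at h1
    simp [hij] at h1
  · obtain ⟨w, rfl⟩ := h1
    refine ⟨w, rfl, ?_⟩
    apply mul_left_cancel₀ (X_ne_zero (R := ℂ) i)
    rw [h]; ring

lemma koszul3 (k1 k2 k3 : S) (h : (X 0 : S) * k1 - X 1 * k2 + X 2 * k3 = 0) :
    ∃ s0 s1 s2 : S, k1 = X 1 * s2 - X 2 * s1 ∧ k2 = X 0 * s2 - X 2 * s0 ∧
      k3 = X 0 * s1 - X 1 * s0 := by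
  obtain ⟨a, ha⟩ := sub0_dvd k2
  obtain ⟨b, hb⟩ := sub0_dvd k3
  have h0 := congrArg sub0 h
  have e0 : sub0 (X 0) = 0 := by simp [sub0]
  have e1 : sub0 (X 1) = X 1 := by simp [sub0]
  have e2 : sub0 (X 2) = X 2 := by simp [sub0]
  simp only [map_add, map_sub, map_mul, map_zero, e0, e1, e2] at h0
  obtain ⟨c, hc1, hc2⟩ := koszul2 2 1 (by decide) (sub0 k2) (sub0 k3) (by linear_combination h0)
  rw [hc1] at ha
  rw [hc2] at hb
  refine ⟨-c, b, a, ?_, by linear_combination ha, by linear_combination hb⟩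
  apply mul_left_cancel₀ (X_ne_zero (R := ℂ) (0 : Fin 3))
  linear_combination h + X 1 * ha - X 2 * hb

/-- the product of all factors except the `j`-th -/
noncomputable def cof {m : ℕ} (F : Fin m → S) (j : Fin m) : S := ∏ k ∈ Finset.univ.erase j, F k

noncomputable def cof2 {m : ℕ} (F : Fin m → S) (i j : Fin m) : S :=
  ∏ k ∈ (Finset.univ.erase j).erase i, F k

lemma mul_cof {m : ℕ} (F : Fin m → S) (j : Fin m) : F j * cof F j = ∏ i, F i :=
  Finset.mul_prod_erase _ _ (Finset.mem_univ j)

lemma mul_cof2 {m : ℕ} (F : Fin m → S) (i j : Fin m) (h : i ≠ j) :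
    F j * cof2 F i j = cof F i := by
  unfold cof cof2
  rw [Finset.erase_right_comm]
  exact Finset.mul_prod_erase _ _ (by simp [h.symm])

lemma mul_cof2' {m : ℕ} (F : Fin m → S) (i j : Fin m) (h : i ≠ j) :
    F i * cof2 F i j = cof F j := by
  unfold cof cof2
  exact Finset.mul_prod_erase _ _ (by simp [h])

lemma pderiv_prod' {m : ℕ} (F : Fin m → S) (t : Fin 3) (s : Finset (Fin m)) :
    pderiv t (∏ i ∈ s, F i) = ∑ i ∈ s, (∏ k ∈ s.erase i, F k) * pderiv t (F i) := by
  induction s using Finset.induction_on with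
  | empty => simp
  | insert a s ha ih =>
    rw [Finset.prod_insert ha, Derivation.leibniz, Finset.sum_insert ha, ih,
      Finset.erase_insert ha, smul_eq_mul, smul_eq_mul, add_comm, Finset.mul_sum]
    congr 1
    apply Finset.sum_congr rfl
    intro i hi
    have hia : a ≠ i := by rintro rfl; exact ha hi
    rw [Finset.erase_insert_of_ne hia, Finset.prod_insert (by simp [ha]), mul_assoc]

lemma grad_prod {m : ℕ} (F : Fin m → S) :
    grad (∏ i, F i) = ∑ i, cof F i • grad (F i) := by
  ext1 t
  simp only [grad, pderiv_prod', cof, Finset.sum_apply, Pi.smul_apply, smul_eq_mul]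

lemma smul_rho {m : ℕ} (F : Fin m → S) (j : Fin m) :
    F j • rho F j = crossProduct (grad (∏ i, F i)) (grad (F j)) := by
  rw [grad_prod, map_sum, LinearMap.sum_apply, rho, Finset.smul_sum,
    ← Finset.add_sum_erase _ _ (Finset.mem_univ j)]
  simp only [map_smul, LinearMap.smul_apply, cross_self, smul_zero, zero_add]
  apply Finset.sum_congr rfl
  intro i hi
  rw [smul_smul]
  congr 1
  exact mul_cof2 F i j (Finset.ne_of_mem_erase hi)

lemma prod_smul_rho {m : ℕ} (F : Fin m → S) (j : Fin m) :
    (∏ i, F i) • rho F j = crossProduct (grad (∏ i, F i)) (cof F j • grad (F j)) := by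
  rw [map_smul, ← smul_rho, smul_smul, mul_comm, mul_cof]

noncomputable def Phi {m : ℕ} (F : Fin m → S) : (Fin m → S) →ₗ[S] (Fin 3 → S) :=
  Fintype.linearCombination S (fun j => cof F j • grad (F j))

noncomputable def Kap {m : ℕ} (F : Fin m → S) : (Fin m → S) →ₗ[S] (Fin 3 → S) :=
  Fintype.linearCombination S (fun j => grad (F j))

lemma Phi_mul {m : ℕ} (F : Fin m → S) (t : Fin m → S) :
    Phi F (fun j => F j * t j) = (∏ i, F i) • Kap F t := by
  simp only [Phi, Kap, Fintype.linearCombination_apply, Finset.smul_sum, smul_smul]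
  apply Finset.sum_congr rfl
  intro i _
  rw [← mul_cof F i]
  congr 1; ring

lemma cross_Phi {m : ℕ} (F : Fin m → S) (g : Fin m → S) :
    crossProduct (grad (∏ i, F i)) (Phi F g) = (∏ i, F i) • ∑ j, g j • rho F j := by
  simp only [Phi, Fintype.linearCombination_apply, map_sum, Finset.smul_sum]
  apply Finset.sum_congr rfl
  intro i _
  rw [smul_comm (∏ i, F i), prod_smul_rho, map_smul _ (g i)]

lemma Phi_one {m : ℕ} (F : Fin m → S) : Phi F (fun _ => 1) = grad (∏ i, F i) := by
  simp [Phi, Fintype.linearCombination_apply, grad_prod]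

lemma dvd_of_sum {m : ℕ} (F : Fin m → S) (a : Fin m → S) (h : ∑ j, cof F j * a j = 0)
    (j : Fin m) : F j ∣ cof F j * a j := by
  rw [← Finset.add_sum_erase _ _ (Finset.mem_univ j)] at h
  rw [eq_neg_of_add_eq_zero_left h, dvd_neg]
  apply Finset.dvd_sum
  intro i hi
  have := Finset.ne_of_mem_erase hi
  rw [← mul_cof2 F i j this, mul_assoc]
  exact dvd_mul_right _ _

section

variable {m : ℕ} {F : Fin m → S}

lemma ker_Phi (hne : ∀ j, F j ≠ 0)
    (hu : ∀ j δ, δ ∣ F j → (∀ t, δ ∣ cof F j * pderiv t (F j)) → IsUnit δ)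
    (g : Fin m → S) (hg : Phi F g = 0) : ∃ t : Fin m → S, (∀ j, g j = F j * t j) ∧ Kap F t = 0 := by
  have h1 : ∀ j, F j ∣ g j := by
    intro j
    apply dvd_of_dvd_mul_family _ _ (fun t => cof F j * pderiv t (F j)) (hne j) _ (hu j)
    intro t
    have h2 : ∑ j, cof F j * (g j * pderiv t (F j)) = 0 := by
      have := congrFun hg t
      simp only [Phi, Fintype.linearCombination_apply, Finset.sum_apply, Pi.smul_apply, grad,
        smul_eq_mul, Pi.zero_apply] at this
      rw [← this]
      apply Finset.sum_congr rfl
      intro i _; ring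
    convert dvd_of_sum F _ h2 j using 1; ring
  choose t ht using h1
  refine ⟨t, ht, ?_⟩
  have : g = fun j => F j * t j := funext ht
  rw [this, Phi_mul] at hg
  exact (smul_eq_zero.1 hg).resolve_left (Finset.prod_ne_zero_iff.2 fun i _ => hne i)

lemma sat_Phi (hne : ∀ j, F j ≠ 0)
    (hu : ∀ j δ, δ ∣ F j → (∀ t, δ ∣ cof F j * pderiv t (F j)) → IsUnit δ)
    (β : (Fin 3 → S) →ₗ[S] (Fin m → S)) (hβ : ∀ u, Kap F (β u) = u)
    (W : Fin 3 → S) (hW : ∀ t, (X t : S) • W ∈ LinearMap.range (Phi F)) :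
    W ∈ LinearMap.range (Phi F) := by
  choose w hw using hW
  have hk : ∀ a b : Fin 3, ∃ k : Fin m → S,
      (∀ j, X a * w b j - X b * w a j = F j * k j) ∧ Kap F k = 0 := by
    intro a b
    have h0 : Phi F ((X a : S) • w b - (X b : S) • w a) = 0 := by
      rw [map_sub, map_smul, map_smul, hw, hw, smul_comm, sub_self]
    exact ker_Phi hne hu _ h0
  obtain ⟨k01, h01, hK01⟩ := hk 0 1
  obtain ⟨k02, h02, hK02⟩ := hk 0 2
  obtain ⟨k12, h12, hK12⟩ := hk 1 2
  have hs : ∀ j, ∃ s0 s1 s2 : S, k12 j = X 1 * s2 - X 2 * s1 ∧ k02 j = X 0 * s2 - X 2 * s0 ∧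
      k01 j = X 0 * s1 - X 1 * s0 := by
    intro j
    apply koszul3
    apply mul_left_cancel₀ (hne j)
    linear_combination - X 0 * h12 j + X 1 * h02 j - X 2 * h01 j
  choose s0 s1 s2 e12 e02 e01 using hs
  have e01' : k01 = (X 0 : S) • s1 - (X 1 : S) • s0 := funext e01
  have hb : ∀ j, (X 0 : S) * β (Kap F s1) j - X 1 * β (Kap F s0) j = 0 := by
    intro j
    have : β (Kap F k01) = 0 := by rw [hK01, map_zero]
    rw [e01', map_sub, map_smul, map_smul, map_sub, map_smul, map_smul] at this
    exact congrFun this j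
  have hc : ∀ j, ∃ r, w 0 j - F j * (s0 j - β (Kap F s0) j) = X 0 * r ∧
      w 1 j - F j * (s1 j - β (Kap F s1) j) = X 1 * r := by
    intro j
    apply koszul2 0 1 (by decide)
    linear_combination h01 j + F j * e01 j + F j * hb j
  choose r hr0 hr1 using hc
  refine ⟨r, ?_⟩
  have h3 : Phi F ((X 0 : S) • r) = (X 0 : S) • W := by
    have : (X 0 : S) • r = w 0 - (fun j => F j * (s0 - β (Kap F s0)) j) := by
      ext1 j; simp [← hr0]
    rw [this, map_sub, Phi_mul, hw, map_sub, hβ, sub_self, smul_zero, sub_zero]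
  rw [map_smul] at h3
  exact smul_right_injective _ (X_ne_zero (R := ℂ) (0 : Fin 3)) h3

end

lemma cross_id1 (a v E : Fin 3 → S) (t : Fin 3) :
    a t • crossProduct v E = crossProduct v E t • a +
      crossProduct (Pi.single t 1) ((∑ s, v s * a s) • E - (∑ s, E s * a s) • v) := by
  ext1 s
  fin_cases t <;> fin_cases s <;>
    simp [cross_apply, Fin.sum_univ_three] <;> ring

lemma cross_id2 (a b v E : Fin 3 → S) (t : Fin 3) :
    crossProduct a b t • crossProduct v E =
      ((∑ s, v s * b s) * E t - (∑ s, E s * b s) * v t) • a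
      - ((∑ s, v s * a s) * E t - (∑ s, E s * a s) * v t) • b
      + ((∑ s, v s * a s) * (∑ s, E s * b s) - (∑ s, E s * a s) * (∑ s, v s * b s)) •
        (Pi.single t 1 : Fin 3 → S) := by
  ext1 s
  fin_cases t <;> fin_cases s <;>
    simp [cross_apply, Fin.sum_univ_three] <;> ring

lemma cross_id3 (a v E : Fin 3 → S) :
    crossProduct a (crossProduct v E) = (∑ s, E s * a s) • v - (∑ s, v s * a s) • E := by
  ext1 s
  fin_cases s <;>
    simp [cross_apply, Fin.sum_univ_three] <;> ring

section

variable {m : ℕ} {F : Fin m → S} {e : Fin m → ℕ}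

lemma unit_lemma (hne : ∀ j, F j ≠ 0)
    (hsmooth : ∀ j, ∀ p : Fin 3 → ℂ,
      (∀ t, eval p (pderiv t (F j)) = 0) → p = 0)
    (hnc : ∀ i j : Fin m, i ≠ j → ∀ p : Fin 3 → ℂ, p ≠ 0 →
      eval p (F i) = 0 → eval p (F j) = 0 →
      LinearIndependent ℂ
        ![fun t => eval p (pderiv t (F i)), fun t => eval p (pderiv t (F j))])
    (j : Fin m) (δ : S) (hδ : δ ∣ F j) (hδ' : ∀ t, δ ∣ cof F j * pderiv t (F j)) : IsUnit δ := by
  by_contra hcon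
  have hδ0 : δ ≠ 0 := by
    rintro rfl
    exact hne j (zero_dvd_iff.1 hδ)
  obtain ⟨q, hq, hqδ⟩ := WfDvdMonoid.exists_irreducible_factor hcon hδ0
  have hqp : Prime q := hq.prime
  obtain ⟨p, hp0, hp⟩ := exists_zero_of_not_isUnit q hq.not_isUnit
  have hqj := hqδ.trans hδ
  by_cases hc : q ∣ cof F j
  · obtain ⟨k, hk, hqk⟩ := (hqp.dvd_finsetProd_iff _).1 hc
    have hkj : j ≠ k := (Finset.ne_of_mem_erase hk).symm
    obtain ⟨a, ha⟩ := hqj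
    obtain ⟨b, hb⟩ := hqk
    have hli := hnc j k hkj p hp0 (by simp [ha, hp]) (by simp [hb, hp])
    have hli0 := hli.ne_zero 0
    rw [LinearIndependent.pair_iff] at hli
    have := hli (eval p b) (- eval p a) (by
      ext1 t
      simp [ha, hb, hp]
      ring)
    apply hli0
    ext1 t
    have ha0 : eval p a = 0 := by simpa using this.2
    simp [ha, hp, ha0]
  · apply hp0
    apply hsmooth j
    intro t
    have h1 : q ∣ pderiv t (F j) := (hqp.dvd_or_dvd (hqδ.trans (hδ' t))).resolve_left hc
    obtain ⟨a, ha⟩ := h1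
    simp [ha, hp]

lemma euler_grad (hhom : ∀ j, (F j).IsHomogeneous (e j)) (j : Fin m) :
    ∑ s, (X s : S) * grad (F j) s = e j * F j := by
  have := (hhom j).sum_X_mul_pderiv
  rw [nsmul_eq_mul] at this
  exact this

lemma euler_prod (hhom : ∀ j, (F j).IsHomogeneous (e j)) :
    ∑ s, (X s : S) * grad (∏ i, F i) s = ((∑ j, e j : ℕ) : S) * ∏ i, F i := by
  have := (IsHomogeneous.prod Finset.univ F e (fun i _ => hhom i)).sum_X_mul_pderiv
  rw [nsmul_eq_mul] at this
  exact this

lemma prod_smul_mem (β : (Fin 3 → S) →ₗ[S] (Fin m → S)) (hβ : ∀ u, Kap F (β u) = u)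
    (u : Fin 3 → S) : (∏ i, F i) • u ∈ LinearMap.range (Phi F) :=
  ⟨fun j => F j * β u j, by rw [Phi_mul, hβ]⟩

lemma cof_smul_mem (j : Fin m) : cof F j • grad (F j) ∈ LinearMap.range (Phi F) :=
  ⟨Pi.single j 1, by simp [Phi, Fintype.linearCombination_apply_single]⟩

lemma cross_mem (hne : ∀ j, F j ≠ 0) (hhom : ∀ j, (F j).IsHomogeneous (e j))
    (hsmooth : ∀ j, ∀ p : Fin 3 → ℂ,
      (∀ t, eval p (pderiv t (F j)) = 0) → p = 0)
    (hnc : ∀ i j : Fin m, i ≠ j → ∀ p : Fin 3 → ℂ, p ≠ 0 →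
      eval p (F i) = 0 → eval p (F j) = 0 →
      LinearIndependent ℂ
        ![fun t => eval p (pderiv t (F i)), fun t => eval p (pderiv t (F j))])
    (htriple : ∀ i j k : Fin m, i ≠ j → i ≠ k → j ≠ k → ∀ p : Fin 3 → ℂ, p ≠ 0 →
      ¬(eval p (F i) = 0 ∧ eval p (F j) = 0 ∧ eval p (F k) = 0))
    (β : (Fin 3 → S) →ₗ[S] (Fin m → S)) (hβ : ∀ u, Kap F (β u) = u)
    (v : Fin 3 → S) (hv : v ∈ D0 (∏ i, F i)) :
    crossProduct v (fun s => (X s : S)) ∈ LinearMap.range (Phi F) := by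
  have hu := unit_lemma hne hsmooth hnc
  set E : Fin 3 → S := fun s => (X s : S) with hE
  -- `v` is logarithmic along every component
  have hlog : ∀ j, ∃ h, ∑ s, v s * grad (F j) s = F j * h := by
    intro j
    have h0 : ∑ s, v s * grad (∏ i, F i) s = 0 := hv
    have h1 : ∑ j, cof F j * (∑ s, v s * grad (F j) s) = 0 := by
      rw [grad_prod] at h0
      rw [← h0]
      simp only [Finset.sum_apply, Finset.mul_sum, Pi.smul_apply, smul_eq_mul]
      rw [Finset.sum_comm]
      refine Finset.sum_congr rfl fun _ _ => Finset.sum_congr rfl fun _ _ => by ring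
    have h2 := dvd_of_sum F _ h1 j
    have hrel : IsRelPrime (F j) (cof F j) := fun δ h1 h2 =>
      hu j δ h1 (fun t => h2.mul_right _)
    exact hrel.dvd_of_dvd_mul_left h2
  choose h hh using hlog
  have heu : ∀ j, ∑ s, E s * grad (F j) s = e j * F j := euler_grad hhom
  let I : Ideal S := (LinearMap.range (Phi F)).comap
    (LinearMap.toSpanSingleton S _ (crossProduct v E))
  have hI : ∀ s, s ∈ I ↔ s • crossProduct v E ∈ LinearMap.range (Phi F) := fun s => Iff.rfl
  have h1 : (1 : S) ∈ I := by
    apply one_mem_of_saturated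
    · intro p hp
      by_cases hf : eval p (∏ i, F i) = 0
      · rw [map_prod, Finset.prod_eq_zero_iff] at hf
        obtain ⟨i, -, hi⟩ := hf
        by_cases hc : eval p (cof F i) = 0
        · rw [cof, map_prod, Finset.prod_eq_zero_iff] at hc
          obtain ⟨j, hj, hj0⟩ := hc
          have hij : i ≠ j := (Finset.ne_of_mem_erase hj).symm
          have hli := hnc i j hij p hp hi hj0
          rw [← crossProduct_ne_zero_iff_linearIndependent] at hli
          obtain ⟨t, ht⟩ := Function.ne_iff.1 hli
          refine ⟨cof2 F i j * crossProduct (grad (F i)) (grad (F j)) t, ?_, ?_⟩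
          · rw [hI, mul_smul, cross_id2, hh, hh, heu, heu, smul_add, smul_sub, smul_smul,
              smul_smul, smul_smul]
            refine add_mem (sub_mem ?_ ?_) ?_
            · have := Submodule.smul_mem _ (h j * E t - e j * v t) (cof_smul_mem (F := F) i)
              rw [smul_smul, ← mul_cof2 F i j hij] at this
              convert this using 2; ring
            · have := Submodule.smul_mem _ (h i * E t - e i * v t) (cof_smul_mem (F := F) j)
              rw [smul_smul, ← mul_cof2' F i j hij] at this
              convert this using 2; ring
            · have := prod_smul_mem β hβ ((h i * e j - e i * h j) • (Pi.single t 1 : Fin 3 → S))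
              rw [smul_smul, ← mul_cof F i, ← mul_cof2 F i j hij] at this
              convert this using 2; ring
          · rw [map_mul]
            refine mul_ne_zero ?_ ?_
            · rw [cof2, map_prod, Finset.prod_ne_zero_iff]
              intro k hk hk0
              simp only [Finset.mem_erase, Finset.mem_univ, and_true] at hk
              exact htriple i j k hij (Ne.symm hk.1) (Ne.symm hk.2) p hp ⟨hi, hj0, hk0⟩
            · rw [Pi.zero_apply] at ht
              convert ht using 1
              fin_cases t <;> simp [cross_apply, grad]
        · have : ∃ t, eval p (pderiv t (F i)) ≠ 0 := by
            by_contra hcon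
            push Not at hcon
            exact hp (hsmooth i p hcon)
          obtain ⟨t, ht⟩ := this
          refine ⟨cof F i * grad (F i) t, ?_, ?_⟩
          · rw [hI, mul_smul, cross_id1, hh, heu, smul_add]
            refine add_mem ?_ ?_
            · rw [smul_comm]
              exact Submodule.smul_mem _ _ (cof_smul_mem i)
            · have := prod_smul_mem β hβ (crossProduct (Pi.single t 1) (h i • E - (e i : S) • v))
              convert this using 1
              have h5 : (F i * h i) • E - ((e i : S) * F i) • v = F i • (h i • E - (e i : S) • v) := by
                rw [smul_sub, smul_smul, smul_smul, mul_comm (F i) (e i : S)]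
              rw [h5, map_smul, smul_smul, mul_comm, mul_cof]
          · rw [map_mul]
            exact mul_ne_zero hc ht
      · exact ⟨_, (hI _).2 (prod_smul_mem β hβ _), hf⟩
    · intro s hs
      rw [hI]
      apply sat_Phi hne hu β hβ
      intro t
      rw [smul_smul]
      exact hs t
  simpa [hI] using h1

lemma mem_D0_iff (f : S) (v : Fin 3 → S) : v ∈ D0 f ↔ ∑ s, v s * grad f s = 0 := Iff.rfl

lemma rho_mem (hne : ∀ j, F j ≠ 0) (j : Fin m) : rho F j ∈ D0 (∏ i, F i) := by
  rw [mem_D0_iff]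
  apply mul_left_cancel₀ (hne j)
  rw [mul_zero, Finset.mul_sum]
  have h : ∀ s, F j * (rho F j s * grad (∏ i, F i) s) =
      crossProduct (grad (∏ i, F i)) (grad (F j)) s * grad (∏ i, F i) s := by
    intro s
    rw [← smul_rho, Pi.smul_apply, smul_eq_mul]; ring
  simp only [h]
  simp [cross_apply, Fin.sum_univ_three]; ring

lemma sum_rho (hne : ∀ j, F j ≠ 0) : ∑ j, rho F j = 0 := by
  have h := cross_Phi F (fun _ => 1)
  rw [Phi_one, cross_self] at h
  simpa using (smul_eq_zero.1 h.symm).resolve_left (Finset.prod_ne_zero_iff.2 fun i _ => hne i)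

lemma exists_coeff (hd : ∑ j, e j ≠ 0)
    (hne : ∀ j, F j ≠ 0) (hhom : ∀ j, (F j).IsHomogeneous (e j))
    (v : Fin 3 → S) (hv : v ∈ D0 (∏ i, F i))
    (hc : crossProduct v (fun s => (X s : S)) ∈ LinearMap.range (Phi F)) :
    ∃ g : Fin m → S, v = ∑ j, g j • rho F j := by
  obtain ⟨g, hg⟩ := hc
  have h := cross_Phi F g
  rw [hg, cross_id3, euler_prod hhom, (mem_D0_iff _ _).1 hv, zero_smul, sub_zero, mul_comm,
    mul_smul] at h
  have h2 := smul_right_injective _ (Finset.prod_ne_zero_iff.2 fun i _ => hne i) h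
  refine ⟨fun j => C ((∑ j, e j : ℕ) : ℂ)⁻¹ * g j, ?_⟩
  simp only [mul_smul]
  rw [← Finset.smul_sum, ← h2, smul_smul]
  have : ((∑ j, e j : ℕ) : S) = C ((∑ j, e j : ℕ) : ℂ) := by simp
  rw [this, ← C_mul, inv_mul_cancel₀ (by exact_mod_cast hd), C_1, one_smul]

lemma ker_rho (hd : ∑ j, e j ≠ 0) (he : ∀ j, 1 ≤ e j)
    (hne : ∀ j, F j ≠ 0) (hhom : ∀ j, (F j).IsHomogeneous (e j))
    (hu : ∀ j δ, δ ∣ F j → (∀ t, δ ∣ cof F j * pderiv t (F j)) → IsUnit δ)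
    (g : Fin m → S) (hg : ∑ j, g j • rho F j = 0) (i j : Fin m) :
    eval 0 (g i) = eval 0 (g j) := by
  have hf : (∏ i, F i) ≠ 0 := Finset.prod_ne_zero_iff.2 fun i _ => hne i
  have h := cross_Phi F g
  rw [hg, smul_zero] at h
  have hEP : ∑ s, (X s : S) * Phi F g s = (∏ i, F i) * ∑ j, g j * e j := by
    simp only [Phi, Fintype.linearCombination_apply, Finset.sum_apply, Pi.smul_apply, smul_eq_mul,
      Finset.mul_sum]
    rw [Finset.sum_comm]
    refine Finset.sum_congr rfl fun k _ => ?_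
    have := euler_grad hhom k
    rw [← mul_cof F k]
    calc _ = g k * cof F k * ∑ s, (X s : S) * grad (F k) s := by
          rw [Finset.mul_sum]
          exact Finset.sum_congr rfl fun _ _ => by ring
      _ = _ := by rw [this]; ring
  set d : S := ((∑ j, e j : ℕ) : S) with hdd
  set q : S := ∑ j, g j * e j with hq
  have h1 : d • Phi F g = q • grad (∏ i, F i) := by
    apply smul_right_injective _ hf
    have h3 := cross_id3 (fun s => (X s : S)) (grad (∏ i, F i)) (Phi F g)
    rw [h, map_zero] at h3
    have h4 := euler_prod hhom
    simp only [mul_comm (X _ : S)] at h4 hEP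
    rw [h4, hEP] at h3
    simp only [smul_smul]
    rw [eq_comm, ← sub_eq_zero, mul_comm _ d, h3]
  rw [← Phi_one, ← map_smul, ← map_smul, ← sub_eq_zero, ← map_sub] at h1
  obtain ⟨t, ht, -⟩ := ker_Phi hne hu _ h1
  have hz : ∀ k, eval 0 (F k) = 0 := by
    intro k
    have := congrArg (eval (0 : Fin 3 → ℂ)) (euler_grad hhom k)
    simp only [map_sum, map_mul, eval_X, Pi.zero_apply, zero_mul, Finset.sum_const_zero,
      map_natCast] at this
    have hk : (e k : ℂ) ≠ 0 := by
      have := he k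
      exact_mod_cast (by omega : e k ≠ 0)
    exact (mul_eq_zero.1 this.symm).resolve_left hk
  have hdC : eval 0 d ≠ 0 := by
    simp only [hdd, map_natCast]; exact_mod_cast hd
  have key : ∀ k, eval 0 d * eval 0 (g k) = eval 0 q := by
    intro k
    have := congrArg (eval (0 : Fin 3 → ℂ)) (ht k)
    simp only [Pi.sub_apply, Pi.smul_apply, smul_eq_mul, mul_one, map_sub, map_mul, hz,
      zero_mul] at this
    exact sub_eq_zero.1 this
  exact mul_left_cancel₀ hdC ((key i).trans (key j).symm)

lemma exists_beta
    (hhom : ∀ j, (F j).IsHomogeneous (e j))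
    (htriple : ∀ i j k : Fin m, i ≠ j → i ≠ k → j ≠ k → ∀ p : Fin 3 → ℂ, p ≠ 0 →
      ¬(eval p (F i) = 0 ∧ eval p (F j) = 0 ∧ eval p (F k) = 0))
    (hl3 : 3 ≤ (Finset.univ.filter (fun j => e j = 1)).card) :
    ∃ β : (Fin 3 → S) →ₗ[S] (Fin m → S), ∀ u, Kap F (β u) = u := by
  obtain ⟨a, ha, b, hb, c, hc, hab, hac, hbc⟩ := Finset.two_lt_card.1 hl3
  simp only [Finset.mem_filter, Finset.mem_univ, true_and] at ha hb hc
  let ix : Fin 3 → Fin m := ![a, b, c]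
  have hix : ∀ l, e (ix l) = 1 := by
    intro l; fin_cases l <;> simp [ix, ha, hb, hc]
  let A : Matrix (Fin 3) (Fin 3) ℂ := fun l t => coeff 0 (pderiv t (F (ix l)))
  have hA : ∀ l t, pderiv t (F (ix l)) = C (A l t) := by
    intro l t
    have := (hhom (ix l)).pderiv (i := t)
    rw [hix, Nat.sub_self, ← totalDegree_zero_iff_isHomogeneous, totalDegree_eq_zero_iff_eq_C]
      at this
    exact this
  have hdet : A.det ≠ 0 := by
    intro h0
    obtain ⟨p, hp, hAp⟩ := Matrix.exists_mulVec_eq_zero_iff.2 h0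
    have hz : ∀ l, eval p (F (ix l)) = 0 := by
      intro l
      have h1 := euler_grad hhom (ix l)
      have h2 := congrFun hAp l
      simp only [Matrix.mulVec, dotProduct, Pi.zero_apply] at h2
      have h3 := congrArg (eval p) h1
      simp only [grad, hA, hix, Nat.cast_one, one_mul, map_sum, map_mul, eval_X, eval_C] at h3
      rw [← h3, ← h2]
      exact Finset.sum_congr rfl fun _ _ => mul_comm _ _
    exact htriple a b c hab hac hbc p hp ⟨hz 0, hz 1, hz 2⟩
  have hBA : A⁻¹ * A = 1 := Matrix.nonsing_inv_mul _ (isUnit_iff_ne_zero.2 hdet)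
  let bb : Fin 3 → (Fin m → S) := fun t => ∑ l, (C (A⁻¹ t l) : S) • (Pi.single (ix l) 1 : Fin m → S)
  have hbb : ∀ t, Kap F (bb t) = Pi.single t 1 := by
    intro t
    simp only [bb, map_sum]
    ext1 s
    have : ∀ l, Kap F (Pi.single (ix l) (1 : S)) = grad (F (ix l)) := by
      intro l; simp [Kap, Fintype.linearCombination_apply_single]
    have h2 := congrFun (congrFun hBA t) s
    rw [Matrix.mul_apply] at h2
    have h3 : ∀ l, Kap F ((C (A⁻¹ t l) : S) • (Pi.single (ix l) 1 : Fin m → S)) =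
        (C (A⁻¹ t l) : S) • grad (F (ix l)) := by
      intro l; rw [← this]; exact map_smul (Kap F) _ _
    simp only [h3, Finset.sum_apply, Pi.smul_apply, grad, hA, smul_eq_mul, ← C_mul]
    rw [← map_sum, h2, Matrix.one_apply, Pi.single_apply]
    by_cases hts : t = s
    · simp [hts]
    · simp [hts, Ne.symm hts]
  refine ⟨Fintype.linearCombination S bb, fun u => ?_⟩
  rw [Fintype.linearCombination_apply, map_sum]
  ext1 s
  simp [hbb, Finset.sum_apply, Pi.single_apply]

end

/-- If all relations between the generators have coefficients vanishing at the origin,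
then every generating set has at least as many elements. -/
lemma card_ge_of_ker {n : ℕ} (R : Fin n → (Fin 3 → S)) (D : Submodule S (Fin 3 → S))
    (hgen : D = Submodule.span S (Set.range R))
    (hker : ∀ g : Fin n → S, ∑ j, g j • R j = 0 → ∀ j, eval 0 (g j) = 0)
    (T : Finset (Fin 3 → S)) (hT : Submodule.span S (T : Set (Fin 3 → S)) = D) :
    n ≤ T.card := by
  classical
  have h1 : ∀ τ : T, ∃ g : Fin n → S, ∑ j, g j • R j = (τ : Fin 3 → S) := by
    intro τ
    have : (τ : Fin 3 → S) ∈ Submodule.span S (Set.range R) := by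
      rw [← hgen, ← hT]; exact Submodule.subset_span τ.2
    exact (Submodule.mem_span_range_iff_exists_fun S).1 this
  choose g hg using h1
  let c : T → (Fin n → ℂ) := fun τ j => eval 0 (g τ j)
  have htop : Submodule.span ℂ (Set.range c) = ⊤ := by
    rw [eq_top_iff, ← (Pi.basisFun ℂ (Fin n)).span_eq, Submodule.span_le]
    rintro _ ⟨j, rfl⟩
    have hj : R j ∈ Submodule.span S (Set.range (fun τ : T => (τ : Fin 3 → S))) := by
      rw [Subtype.range_coe_subtype]
      have : {x | x ∈ T} = (T : Set (Fin 3 → S)) := rfl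
      rw [this, hT, hgen]
      exact Submodule.subset_span ⟨j, rfl⟩
    obtain ⟨a, ha⟩ := (Submodule.mem_span_range_iff_exists_fun S).1 hj
    have hk := hker (fun k => (∑ τ, a τ * g τ k) - (Pi.single j 1 : Fin n → S) k) (by
      simp only [sub_smul, Finset.sum_sub_distrib, Finset.sum_smul]
      rw [Finset.sum_comm]
      simp only [mul_smul, ← Finset.smul_sum, hg, ha]
      simp [Pi.single_apply, ite_smul])
    refine (Submodule.mem_span_range_iff_exists_fun ℂ).2 ⟨fun τ => eval 0 (a τ), ?_⟩
    ext1 k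
    have := hk k
    simp only [map_sub, map_sum, map_mul, sub_eq_zero] at this
    simp only [Finset.sum_apply, Pi.smul_apply, smul_eq_mul, c, this, Pi.basisFun_apply,
      Pi.single_apply]
    split_ifs <;> simp
  have h2 := finrank_range_le_card (R := ℂ) c
  rw [Set.finrank, htop, finrank_top, Module.finrank_fin_fun, Fintype.card_coe] at h2
  exact h2
/-- if `ℓ(C) ≥ 3` (at least three of the degrees `e_j` equal 1), then
`D₀(f)` is generated by `G = {ρ_1, …, ρ_{m−1}}`, this generating set is minimal, and every
generating set of `D₀(f)` has at least `m − 1` elements, so `C` is an `(m−1)`-syzygy curve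
with exponents `d_1 = ⋯ = d_{m−1} = d−2`. -/
theorem caseL3_minimal_generators
    (m : ℕ) (hm : 4 ≤ m) (F : Fin m → S) (e : Fin m → ℕ)
    (he : ∀ j, 1 ≤ e j)
    (hhom : ∀ j, (F j).IsHomogeneous (e j))
    (hsmooth : ∀ j, ∀ p : Fin 3 → ℂ,
      (∀ t, eval p (pderiv t (F j)) = 0) → p = 0)
    (hnc : ∀ i j : Fin m, i ≠ j → ∀ p : Fin 3 → ℂ, p ≠ 0 →
      eval p (F i) = 0 → eval p (F j) = 0 →
      LinearIndependent ℂ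
        ![fun t => eval p (pderiv t (F i)), fun t => eval p (pderiv t (F j))])
    (htriple : ∀ i j k : Fin m, i ≠ j → i ≠ k → j ≠ k → ∀ p : Fin 3 → ℂ, p ≠ 0 →
      ¬(eval p (F i) = 0 ∧ eval p (F j) = 0 ∧ eval p (F k) = 0))
    (hl3 : 3 ≤ (Finset.univ.filter (fun j => e j = 1)).card) :
    D0 (∏ i, F i) = Submodule.span S
        (Set.range (fun j : Fin (m - 1) => rho F (Fin.castLE (Nat.sub_le m 1) j))) ∧
    (∀ i : Fin (m - 1), rho F (Fin.castLE (Nat.sub_le m 1) i) ∉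
      Submodule.span S ((fun j : Fin (m - 1) => rho F (Fin.castLE (Nat.sub_le m 1) j)) '' {i}ᶜ)) ∧
    (∀ T : Finset (Fin 3 → S),
      Submodule.span S (T : Set (Fin 3 → S)) = D0 (∏ i, F i) → m - 1 ≤ T.card) := by
  have hne : ∀ j, F j ≠ 0 := by
    intro j h0
    have := hsmooth j (fun _ => 1) (by intro t; simp [h0])
    exact one_ne_zero (congrFun this 0)
  obtain ⟨n, rfl⟩ : ∃ n, m = n + 1 := ⟨m - 1, by omega⟩
  have hd : ∑ j, e j ≠ 0 := by
    have h1 : e 0 ≤ ∑ j, e j := Finset.single_le_sum (fun _ _ => Nat.zero_le _) (Finset.mem_univ 0)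
    have := he 0
    omega
  have hu := unit_lemma hne hsmooth hnc
  obtain ⟨β, hβ⟩ := exists_beta hhom htriple hl3
  let R : Fin n → (Fin 3 → S) := fun j => rho F j.castSucc
  change D0 (∏ i, F i) = Submodule.span S (Set.range R) ∧
    (∀ i : Fin n, R i ∉ Submodule.span S (R '' {i}ᶜ)) ∧
    (∀ T : Finset (Fin 3 → S),
      Submodule.span S (T : Set (Fin 3 → S)) = D0 (∏ i, F i) → n ≤ T.card)
  have hgen : D0 (∏ i, F i) = Submodule.span S (Set.range R) := by
    apply le_antisymm
    · intro v hv
      obtain ⟨g, rfl⟩ := exists_coeff hd hne hhom v hv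
        (cross_mem hne hhom hsmooth hnc htriple β hβ v hv)
      have hR : ∀ j : Fin n, rho F j.castSucc ∈ Submodule.span S (Set.range R) :=
        fun j => Submodule.subset_span ⟨j, rfl⟩
      have hall : ∀ j, rho F j ∈ Submodule.span S (Set.range R) := by
        intro j
        refine Fin.lastCases ?_ hR j
        have h1 := sum_rho hne
        rw [Fin.sum_univ_castSucc] at h1
        rw [eq_neg_of_add_eq_zero_right h1]
        exact neg_mem (sum_mem fun j _ => hR j)
      exact sum_mem fun j _ => Submodule.smul_mem _ _ (hall j)
    · rw [Submodule.span_le]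
      rintro _ ⟨j, rfl⟩
      exact rho_mem hne _
  have hmin : ∀ T : Finset (Fin 3 → S),
      Submodule.span S (T : Set (Fin 3 → S)) = D0 (∏ i, F i) → n ≤ T.card :=
    card_ge_of_ker R _ hgen (by
      intro g hg j
      have h1 := ker_rho hd he hne hhom hu (Fin.snoc (α := fun _ => S) g 0)
        (by rw [Fin.sum_univ_castSucc]; simpa [R] using hg) j.castSucc (Fin.last n)
      simpa using h1)
  refine ⟨hgen, ?_, hmin⟩
  intro i hi
  classical
  have h1 := hmin ((Finset.univ.erase i).image R) (by
    rw [hgen]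
    apply le_antisymm
    · apply Submodule.span_mono
      intro x hx
      simp only [Finset.coe_image] at hx
      obtain ⟨j, -, rfl⟩ := hx
      exact ⟨j, rfl⟩
    · rw [Submodule.span_le]
      have hset : (((Finset.univ.erase i).image R : Finset _) : Set (Fin 3 → S)) = R '' {i}ᶜ := by
        ext x; simp
      rw [hset]
      rintro _ ⟨j, rfl⟩
      by_cases hj : j = i
      · rw [hj]; exact hi
      · exact Submodule.subset_span ⟨j, hj, rfl⟩)
  have h2 := (Finset.card_image_le (s := Finset.univ.erase i) (f := R))
  rw [Finset.card_erase_of_mem (Finset.mem_univ i), Finset.card_univ, Fintype.card_fin] at h2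
  have := i.pos
  omega
end

section
/- If ℓ(C) ≤ 2, then the minimal number of generators of the S-module D₀(f) (the smallest cardinality of a generating set) is exactly m + 2 − ℓ(C); that is, C is an s-syzygy curve with s = m + 2 − ℓ(C). -/
open MvPolynomial

namespace NCAux

lemma X_ndvd {i j : Fin 3} (h : i ≠ j) : ¬ (X i : S) ∣ X j := by
  rw [X_dvd_X]
  simp [h]

/-- From `X i * a = X j * b` with `i ≠ j` one gets `X j ∣ a`. -/
lemma X_dvd_of {i j : Fin 3} (h : i ≠ j) {a b : S} (H : X i * a = X j * b) : (X j : S) ∣ a := by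
  have h1 : (X j : S) ∣ X i * a := ⟨b, H⟩
  rcases (X_prime (R := ℂ) (i := j)).dvd_or_dvd h1 with h2 | h2
  · exact absurd h2 (X_ndvd h.symm)
  · exact h2

lemma sat_one (g h : S) (H : ∀ i, g ∣ X i * h) : g ∣ h := by
  obtain ⟨u, hu⟩ := H 0
  obtain ⟨v, hv⟩ := H 1
  by_cases hg : g = 0
  · subst hg
    have : (X 0 : S) * h = 0 := by rw [hu, zero_mul]
    rcases mul_eq_zero.1 this with h1 | h1
    · exact absurd h1 (X_ne_zero 0)
    · rw [h1]
  have h1 : X 1 * u = X 0 * v := by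
    apply mul_left_cancel₀ hg
    linear_combination (-(X 1 : S)) * hu + X 0 * hv
  obtain ⟨u', rfl⟩ := X_dvd_of (by decide) h1
  refine ⟨u', mul_left_cancel₀ (X_ne_zero (R := ℂ) (0 : Fin 3)) ?_⟩
  linear_combination hu

lemma X2_colon (h : S) (H : X 2 * h ∈ Ideal.span ({X 0, X 1} : Set S)) :
    h ∈ Ideal.span ({X 0, X 1} : Set S) := by
  have e : ({X 0, X 1} : Set S) = X '' ({0, 1} : Set (Fin 3)) := by simp [Set.image_pair]
  rw [e, mem_ideal_span_X_image] at H ⊢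
  intro m hm
  have := H (Finsupp.single 2 1 + m) (by
    rw [mem_support_iff] at *
    rwa [coeff_X_mul])
  obtain ⟨i, hi, h2⟩ := this
  refine ⟨i, hi, ?_⟩
  rcases hi with rfl | hi
  · simpa using h2
  · rw [Set.mem_singleton_iff] at hi
    subst hi
    simpa using h2

lemma kos_one (r : Fin 3 → S) (H : r 0 * X 0 + r 1 * X 1 + r 2 * X 2 = 0) :
    ∃ s : Fin 3 → S, r 0 = s 1 * X 2 - s 2 * X 1 ∧ r 1 = s 2 * X 0 - s 0 * X 2 ∧
      r 2 = s 0 * X 1 - s 1 * X 0 := by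
  have h2 : r 2 ∈ Ideal.span ({X 0, X 1} : Set S) := by
    apply X2_colon
    rw [Ideal.mem_span_pair]
    exact ⟨-r 0, -r 1, by linear_combination -H⟩
  obtain ⟨p, q, hpq⟩ := Ideal.mem_span_pair.1 h2
  have h3 : X 1 * (r 1 + q * X 2) = X 0 * (-(r 0 + p * X 2)) := by
    linear_combination H + X 2 * hpq
  obtain ⟨t, ht⟩ := X_dvd_of (by decide) h3
  have h4 : r 0 + p * X 2 = - X 1 * t := by
    apply mul_left_cancel₀ (X_ne_zero (R := ℂ) (0 : Fin 3))
    linear_combination h3 - X 1 * ht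
  refine ⟨![q, -p, t], ?_, ?_, ?_⟩ <;> simp
  · linear_combination h4
  · linear_combination ht
  · linear_combination -hpq

lemma kos_two (p : Fin 3 → S) (H1 : p 0 * X 1 = p 1 * X 0) (H2 : p 0 * X 2 = p 2 * X 0) :
    ∃ t : S, ∀ i, p i = t * X i := by
  have h1 : X 1 * p 0 = X 0 * p 1 := by linear_combination H1
  obtain ⟨t, ht⟩ := X_dvd_of (by decide) h1
  refine ⟨t, ?_⟩
  have hX := X_ne_zero (R := ℂ) (0 : Fin 3)
  intro i
  fin_cases i <;> simp
  · linear_combination ht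
  · apply mul_left_cancel₀ hX
    linear_combination -H1 + X 1 * ht
  · apply mul_left_cancel₀ hX
    linear_combination -H2 + X 2 * ht

lemma kos (g : S) (hg : g ≠ 0) (b : Fin 3 → S) (H : ∀ i j, g ∣ b i * X j - b j * X i) :
    ∃ t : S, ∀ i, g ∣ b i - t * X i := by
  obtain ⟨r2, h2⟩ := H 0 1
  obtain ⟨r0, h0⟩ := H 1 2
  obtain ⟨r1, h1⟩ := H 2 0
  obtain ⟨s, hs0, hs1, hs2⟩ := kos_one ![r0, r1, r2] (by
    simp
    apply mul_left_cancel₀ hg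
    linear_combination -X 0 * h0 - X 1 * h1 - X 2 * h2)
  simp at hs0 hs1 hs2
  obtain ⟨t, ht⟩ := kos_two (fun i => b i - g * s i)
    (by linear_combination h2 + g * hs2)
    (by linear_combination -h1 - g * hs1)
  exact ⟨t, fun i => ⟨s i, by linear_combination ht i⟩⟩

/-- A submodule is saturated with respect to the irrelevant ideal. -/
def Sat {N : Type*} [AddCommGroup N] [Module S N] (M : Submodule S N) : Prop :=
  ∀ w, (∀ i, (X i : S) • w ∈ M) → w ∈ M

lemma sat_null {N : Type*} [AddCommGroup N] [Module S N] {M : Submodule S N} (hM : Sat M) (w : N)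
    (H : ∀ p : Fin 3 → ℂ, (∀ g : S, g • w ∈ M → eval p g = 0) → p = 0) : w ∈ M := by
  let J : Ideal S := M.comap (LinearMap.toSpanSingleton S N w)
  have hJ : ∀ g, g ∈ J ↔ g • w ∈ M := fun g => by simp [J]
  let I : Ideal S := Ideal.span (Set.range X)
  have hle : I ≤ J.radical := by
    rw [← vanishingIdeal_zeroLocus_eq_radical (K := ℂ)]
    rw [Ideal.span_le]
    rintro _ ⟨i, rfl⟩
    rw [SetLike.mem_coe, mem_vanishingIdeal_iff]
    intro p hp
    have : p = 0 := H p (fun g hg => by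
      have := hp g ((hJ g).2 hg)
      simpa [aeval_eq_eval] using this)
    simp [this]
  obtain ⟨n, hn⟩ := Ideal.exists_pow_le_of_le_radical_of_fg hle (IsNoetherian.noetherian _)
  have key : ∀ n : ℕ, ∀ w, (∀ g ∈ I ^ n, g • w ∈ M) → w ∈ M := by
    intro n
    induction n with
    | zero =>
      intro w h
      simpa using h 1 (by simp)
    | succ n ih =>
      intro w h
      apply hM
      intro i
      apply ih
      intro g hg
      rw [smul_smul]
      apply h
      rw [pow_succ]
      exact Ideal.mul_mem_mul hg (Ideal.subset_span ⟨i, rfl⟩)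
  exact key n w fun g hg => (hJ g).1 (hn hg)

lemma sat_principal (g : S) : Sat (Ideal.span ({g} : Set S)) := by
  intro w hw
  simp only [smul_eq_mul, Ideal.mem_span_singleton] at *
  exact sat_one g w hw

lemma sat_pair (a b : S) (hb : b ≠ 0) (hab : IsRelPrime a b) :
    Sat (Ideal.span ({a, b} : Set S)) := by
  intro h hh
  simp only [smul_eq_mul, Ideal.mem_span_pair] at *
  choose p q hpq using hh
  obtain ⟨t, ht⟩ := kos b hb p (fun i j => by
    apply hab.symm.dvd_of_dvd_mul_right (z := a)
    exact ⟨q j * X i - q i * X j, by linear_combination X j * hpq i - X i * hpq j⟩)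
  have : b ∣ h - t * a := by
    apply sat_one
    intro i
    obtain ⟨s, hs⟩ := ht i
    exact ⟨q i + a * s, by linear_combination a * hs - hpq i⟩
  obtain ⟨u, hu⟩ := this
  exact ⟨t, u, by linear_combination -hu⟩

/-- If `h ∇g ≡ 0` modulo `g` then `g ∣ h`. -/
lemma dvd_of_dvd_mul_grad (g : S) (hs : ∀ p : Fin 3 → ℂ, (∀ t, eval p (pderiv t g) = 0) → p = 0)
    (h : S) (H : ∀ k, g ∣ h * pderiv k g) : g ∣ h := by
  rw [← Ideal.mem_span_singleton]
  apply sat_null (sat_principal g)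
  intro p hp
  apply hs
  intro t
  apply hp
  rw [smul_eq_mul, Ideal.mem_span_singleton, mul_comm]
  exact H t

lemma exists_of_cross (g : S) (hg : g ≠ 0)
    (hs : ∀ p : Fin 3 → ℂ, (∀ t, eval p (pderiv t g) = 0) → p = 0)
    (w : Fin 3 → S) (H : ∀ i j, g ∣ pderiv i g * w j - pderiv j g * w i) :
    ∃ t : S, ∀ k, g ∣ w k - t * pderiv k g := by
  let M : Submodule S (Fin 3 → S) :=
    { carrier := {w | ∃ t : S, ∀ k, g ∣ w k - t * pderiv k g}
      add_mem' := by
        rintro a b ⟨t, ht⟩ ⟨u, hu⟩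
        refine ⟨t + u, fun k => ?_⟩
        have := dvd_add (ht k) (hu k)
        rw [Pi.add_apply]
        convert this using 1
        ring
      zero_mem' := ⟨0, fun k => by simp⟩
      smul_mem' := by
        rintro c a ⟨t, ht⟩
        refine ⟨c * t, fun k => ?_⟩
        have := (ht k).mul_left c
        rw [Pi.smul_apply, smul_eq_mul]
        convert this using 1
        ring }
  have hM : ∀ w, w ∈ M ↔ ∃ t : S, ∀ k, g ∣ w k - t * pderiv k g := fun _ => Iff.rfl
  rw [← hM]
  have hsat : Sat M := by
    intro w hw
    simp only [hM, Pi.smul_apply, smul_eq_mul] at *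
    choose b hb using hw
    obtain ⟨t, ht⟩ := kos g hg b (fun i j => by
      apply dvd_of_dvd_mul_grad g hs
      intro k
      have := dvd_sub ((hb j k).mul_left (X i)) ((hb i k).mul_left (X j))
      convert this using 1
      ring)
    refine ⟨t, fun k => sat_one _ _ fun i => ?_⟩
    have := dvd_add (hb i k) ((ht i).mul_right (pderiv k g))
    convert this using 1
    ring
  apply sat_null hsat
  intro p hp
  apply hs
  intro i
  apply hp
  rw [hM]
  refine ⟨w i, fun k => ?_⟩
  convert H i k using 1
  simp only [Pi.smul_apply, smul_eq_mul]
  ring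

lemma not_linInd (u v : Fin 3 → ℂ) (h : ∀ i j, u i * v j = u j * v i) :
    ¬ LinearIndependent ℂ ![u, v] := by
  intro H
  have hu : u ≠ 0 := H.ne_zero 0
  rw [LinearIndependent.pair_iff] at H
  apply hu
  funext t
  have := H (v t) (-u t) (by
    funext k
    simp
    linear_combination h k t)
  simpa using this.2

/-- Any nonconstant polynomial has a nonzero zero. -/
lemma isUnit_of_zero (p : S) (H : ∀ q : Fin 3 → ℂ, eval q p = 0 → q = 0) : IsUnit p := by
  rw [isUnit_iff_dvd_one, ← Ideal.mem_span_singleton]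
  apply sat_null (sat_principal p)
  intro q hq
  apply H
  apply hq
  simp

lemma relPrime_of_nc (a b : S) (H : ∀ p : Fin 3 → ℂ, p ≠ 0 → eval p a = 0 → eval p b = 0 →
      LinearIndependent ℂ ![fun t => eval p (pderiv t a), fun t => eval p (pderiv t b)]) :
    IsRelPrime a b := by
  rintro c ⟨a', rfl⟩ ⟨b', rfl⟩
  apply isUnit_of_zero
  intro q hq
  by_contra hq0
  refine not_linInd _ _ ?_ (H q hq0 (by simp [hq]) (by simp [hq]))
  intro i j
  simp only [Derivation.leibniz, smul_eq_mul, map_add, map_mul, hq]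
  ring

end NCAux
namespace NCAux

/-- The geometric hypotheses on the components. -/
structure NC {m : ℕ} (F : Fin m → S) (e : Fin m → ℕ) : Prop where
  he : ∀ j, 1 ≤ e j
  hhom : ∀ j, (F j).IsHomogeneous (e j)
  hsmooth : ∀ j, ∀ p : Fin 3 → ℂ, (∀ t, eval p (pderiv t (F j)) = 0) → p = 0
  hnc : ∀ i j : Fin m, i ≠ j → ∀ p : Fin 3 → ℂ, p ≠ 0 →
      eval p (F i) = 0 → eval p (F j) = 0 →
      LinearIndependent ℂ
        ![fun t => eval p (pderiv t (F i)), fun t => eval p (pderiv t (F j))]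
  htriple : ∀ i j k : Fin m, i ≠ j → i ≠ k → j ≠ k → ∀ p : Fin 3 → ℂ, p ≠ 0 →
      ¬(eval p (F i) = 0 ∧ eval p (F j) = 0 ∧ eval p (F k) = 0)

variable {m : ℕ} {F : Fin m → S} {e : Fin m → ℕ}

/-- The cofactor `f / f_j`. -/
noncomputable def cof (F : Fin m → S) (j : Fin m) : S := ∏ k ∈ Finset.univ.erase j, F k

lemma mul_cof (F : Fin m → S) (j : Fin m) : F j * cof F j = ∏ i, F i :=
  Finset.mul_prod_erase _ _ (Finset.mem_univ j)

lemma dvd_cof {i j : Fin m} (h : j ≠ i) : F j ∣ cof F i :=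
  Finset.dvd_prod_of_mem _ (by simp [h])

lemma NC.rel (h : NC F e) {i j : Fin m} (hij : i ≠ j) : IsRelPrime (F i) (F j) :=
  relPrime_of_nc _ _ (h.hnc i j hij)

lemma NC.ne_zero (h : NC F e) (j : Fin m) : F j ≠ 0 := by
  intro h0
  have := h.hsmooth j 1 (by simp [h0])
  exact one_ne_zero this

lemma NC.prod_ne_zero (h : NC F e) : ∏ i, F i ≠ 0 :=
  Finset.prod_ne_zero_iff.2 fun j _ => h.ne_zero j

lemma NC.rel_cof (h : NC F e) (j : Fin m) : IsRelPrime (F j) (cof F j) :=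
  IsRelPrime.prod_right fun i hi => h.rel (by
    rintro rfl
    simp at hi)

lemma pderiv_prod (F : Fin m → S) (t : Fin 3) :
    pderiv t (∏ i, F i) = ∑ j, cof F j * pderiv t (F j) := by
  have key : ∀ s : Finset (Fin m), pderiv t (∏ i ∈ s, F i) =
      ∑ j ∈ s, (∏ k ∈ s.erase j, F k) * pderiv t (F j) := by
    intro s
    induction s using Finset.induction_on with
    | empty => simp
    | insert a s ha ih =>
      rw [Finset.prod_insert ha, Derivation.leibniz, ih, Finset.sum_insert ha,
        Finset.erase_insert ha]
      simp only [smul_eq_mul]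
      rw [add_comm, Finset.mul_sum]
      congr 1
      apply Finset.sum_congr rfl
      intro j hj
      have haj : a ≠ j := by
        rintro rfl
        exact ha hj
      rw [Finset.erase_insert_of_ne haj, Finset.prod_insert (by simp [ha]), mul_assoc]
  exact key _

/-- Multiplied form of `ρ_j`. -/
lemma mul_rho (F : Fin m → S) (j : Fin m) :
    F j • rho F j = crossProduct (grad (∏ i, F i)) (grad (F j)) := by
  have hg : grad (∏ i, F i) = ∑ i, cof F i • grad (F i) := by
    funext t
    simp [grad, pderiv_prod]
  rw [hg, map_sum, LinearMap.sum_apply, ← Finset.add_sum_erase _ _ (Finset.mem_univ j), map_smul,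
    LinearMap.smul_apply, cross_self, smul_zero, zero_add, rho, Finset.smul_sum]
  apply Finset.sum_congr rfl
  intro i hi
  have hij : i ≠ j := by simpa using hi
  rw [map_smul, LinearMap.smul_apply, smul_smul]
  congr 1
  rw [Finset.erase_right_comm, Finset.mul_prod_erase (Finset.univ.erase i) F (by simp [hij.symm])]
  rfl

/-- The presentation map of `D₀(f)`. -/
noncomputable def Phi (F : Fin m → S) : ((Fin 3 → S) × (Fin m → S)) →ₗ[S] (Fin 3 → S) :=
  LinearMap.coprod (crossProduct (grad (∏ i, F i))) (Fintype.linearCombination S (rho F))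

lemma Phi_apply (F : Fin m → S) (a : Fin 3 → S) (b : Fin m → S) :
    Phi F (a, b) = crossProduct (grad (∏ i, F i)) a + ∑ j, b j • rho F j := by
  simp [Phi, Fintype.linearCombination_apply]

lemma mul_Phi (F : Fin m → S) (a : Fin 3 → S) (b : Fin m → S) :
    (∏ i, F i) • Phi F (a, b) = crossProduct (grad (∏ i, F i))
      ((∏ i, F i) • a + ∑ j, (b j * cof F j) • grad (F j)) := by
  rw [Phi_apply, smul_add, map_add, map_smul, map_sum, Finset.smul_sum]
  congr 1
  apply Finset.sum_congr rfl
  intro j _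
  rw [map_smul, ← mul_rho, smul_smul, smul_smul, ← mul_cof F j]
  congr 1
  ring

lemma mem_D0 (f : S) (v : Fin 3 → S) : v ∈ D0 f ↔ ∑ t, v t * pderiv t f = 0 := Iff.rfl

lemma NC.Phi_mem (h : NC F e) (x : (Fin 3 → S) × (Fin m → S)) : Phi F x ∈ D0 (∏ i, F i) := by
  obtain ⟨a, b⟩ := x
  rw [mem_D0]
  apply mul_left_cancel₀ h.prod_ne_zero
  have := mul_Phi F a b
  set w := ((∏ i, F i) • a + ∑ j, (b j * cof F j) • grad (F j))
  have hd := dot_self_cross (grad (∏ i, F i)) w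
  rw [← this] at hd
  simp only [dotProduct, Fin.sum_univ_three, grad, Pi.smul_apply, smul_eq_mul] at hd ⊢
  linear_combination hd

lemma NC.euler (h : NC F e) : ∃ d : ℂ, (0 < m → d ≠ 0) ∧
    ∑ t, X t * pderiv t (∏ i, F i) = C d * ∏ i, F i := by
  refine ⟨((∑ j, e j : ℕ) : ℂ), ?_, ?_⟩
  · intro hm
    rw [Nat.cast_ne_zero]
    have h1 := Finset.single_le_sum (f := e) (fun i _ => Nat.zero_le _)
      (Finset.mem_univ (⟨0, hm⟩ : Fin m))
    have h2 := h.he ⟨0, hm⟩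
    omega
  · have hh : (∏ i, F i).IsHomogeneous (∑ j, e j) :=
      IsHomogeneous.prod _ _ _ fun j _ => h.hhom j
    rw [hh.sum_X_mul_pderiv, nsmul_eq_mul]
    simp

lemma NC.mem_span_prod (h : NC F e) (j : Fin m) (b : S) (s : Finset (Fin m)) (hj : j ∉ s)
    (H : ∀ k ∈ s, b ∈ Ideal.span ({F j, F k} : Set S)) :
    b ∈ Ideal.span ({F j, ∏ k ∈ s, F k} : Set S) := by
  induction s using Finset.induction_on with
  | empty =>
    rw [Ideal.mem_span_pair]
    exact ⟨0, b, by simp⟩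
  | insert k s hk ih =>
    have h1 := ih (fun hh => hj (by simp [hh])) (fun l hl => H l (by simp [hl]))
    have h2 := H k (by simp)
    have hjk : j ≠ k := by
      rintro rfl
      exact hj (by simp)
    obtain ⟨u, c, huc⟩ := Ideal.mem_span_pair.1 h1
    have hc : c ∈ Ideal.span ({F j, F k} : Set S) := by
      apply sat_null (sat_pair _ _ (h.ne_zero k) (h.rel hjk))
      intro p hp
      by_contra hp0
      have e1 : eval p (F j) = 0 := hp _ (Ideal.mul_mem_right _ _ (Ideal.subset_span (by simp)))
      have e2 : eval p (F k) = 0 := hp _ (Ideal.mul_mem_right _ _ (Ideal.subset_span (by simp)))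
      have e3 : eval p (∏ k ∈ s, F k) = 0 := hp _ (by
        have : (∏ k ∈ s, F k) • c = b - u * F j := by
          rw [smul_eq_mul]
          linear_combination huc
        rw [this]
        exact Ideal.sub_mem _ h2 (Ideal.mul_mem_left _ _ (Ideal.subset_span (by simp))))
      rw [map_prod, Finset.prod_eq_zero_iff] at e3
      obtain ⟨l, hl, e3⟩ := e3
      refine h.htriple j k l hjk ?_ ?_ p hp0 ⟨e1, e2, e3⟩
      · rintro rfl
        exact hj (by simp [hl])
      · rintro rfl
        exact hk hl
    obtain ⟨u', c', h3⟩ := Ideal.mem_span_pair.1 hc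
    rw [Ideal.mem_span_pair, Finset.prod_insert hk]
    exact ⟨u + u' * ∏ k ∈ s, F k, c', by linear_combination huc + (∏ k ∈ s, F k) * h3⟩

/-- Every form `w` with `∇f_j × w ≡ 0 mod f_j` is in the span of `f dx_i` and `(f/f_j) df_j`. -/
lemma NC.forms (h : NC F e) (w : Fin 3 → S)
    (H : ∀ j, ∀ s t, F j ∣ pderiv s (F j) * w t - pderiv t (F j) * w s) :
    ∃ (a : Fin 3 → S) (b : Fin m → S),
      w = (∏ i, F i) • a + ∑ j, (b j * cof F j) • grad (F j) := by
  have h1 : ∀ j, ∃ b : S, ∀ k, F j ∣ w k - b * pderiv k (F j) := fun j =>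
    exists_of_cross _ (h.ne_zero j) (h.hsmooth j) w (H j)
  choose b hb using h1
  have h2 : ∀ j k, j ≠ k → b j ∈ Ideal.span ({F j, F k} : Set S) := by
    intro j k hjk
    apply sat_null (sat_pair _ _ (h.ne_zero k) (h.rel hjk))
    intro p hp
    by_contra hp0
    have e1 : eval p (F j) = 0 := hp _ (Ideal.mul_mem_right _ _ (Ideal.subset_span (by simp)))
    have e2 : eval p (F k) = 0 := hp _ (Ideal.mul_mem_right _ _ (Ideal.subset_span (by simp)))
    refine not_linInd _ _ ?_ (h.hnc j k hjk p hp0 e1 e2)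
    intro s t
    have := hp (pderiv s (F j) * pderiv t (F k) - pderiv t (F j) * pderiv s (F k)) (by
      rw [smul_eq_mul, Ideal.mem_span_pair]
      obtain ⟨x1, y1⟩ := hb j s
      obtain ⟨x2, y2⟩ := hb j t
      obtain ⟨x3, y3⟩ := hb k s
      obtain ⟨x4, y4⟩ := hb k t
      exact ⟨x2 * pderiv s (F k) - x1 * pderiv t (F k), x3 * pderiv t (F k) - x4 * pderiv s (F k),
        by linear_combination pderiv t (F k) * y1 - pderiv s (F k) * y2
          - pderiv t (F k) * y3 + pderiv s (F k) * y4⟩)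
    simp only [map_sub, map_mul] at this
    linear_combination this
  have h3 : ∀ j, ∃ b' : S, F j ∣ b j - b' * cof F j := by
    intro j
    obtain ⟨u, c, huc⟩ := Ideal.mem_span_pair.1 (h.mem_span_prod j (b j) (Finset.univ.erase j)
      (by simp) (fun k hk => h2 j k (by
        rintro rfl
        simp at hk)))
    refine ⟨c, u, ?_⟩
    rw [cof]
    linear_combination -huc
  choose b' hb' using h3
  have h4 : ∀ t, (∏ i, F i) ∣ w t - ∑ j, b' j * cof F j * pderiv t (F j) := by
    intro t
    apply Fintype.prod_dvd_of_isRelPrime (fun i j hij => h.rel hij)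
    intro j
    rw [← Finset.add_sum_erase _ _ (Finset.mem_univ j), ← sub_sub]
    apply dvd_sub
    · have := dvd_add (hb j t) ((hb' j).mul_right (pderiv t (F j)))
      convert this using 1
      ring
    · apply Finset.dvd_sum
      intro i hi
      have : j ≠ i := by
        rintro rfl
        simp at hi
      exact ((dvd_cof this).mul_left _).mul_right _
  choose a ha using h4
  refine ⟨a, b', ?_⟩
  funext t
  simp only [Pi.add_apply, Pi.smul_apply, smul_eq_mul, Finset.sum_apply, grad]
  linear_combination ha t

lemma fin3 {P : Fin 3 → Prop} (h0 : P 0) (h1 : P 1) (h2 : P 2) (t : Fin 3) : P t := by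
  fin_cases t
  · exact h0
  · exact h1
  · exact h2

lemma cross_dvd (g : S) (u v y : Fin 3 → S) (hp : g ∣ ∑ t, v t * u t)
    (hq : g ∣ ∑ t, y t * u t) (s t : Fin 3) :
    g ∣ u s * crossProduct v y t - u t * crossProduct v y s := by
  obtain ⟨p, hp⟩ := hp
  obtain ⟨q, hq⟩ := hq
  simp only [Fin.sum_univ_three] at hp hq
  have k01 : g ∣ u 0 * crossProduct v y 1 - u 1 * crossProduct v y 0 := by
    refine ⟨v 2 * q - y 2 * p, ?_⟩
    simp only [cross_apply, Matrix.cons_val]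
    linear_combination v 2 * hq - y 2 * hp
  have k12 : g ∣ u 1 * crossProduct v y 2 - u 2 * crossProduct v y 1 := by
    refine ⟨v 0 * q - y 0 * p, ?_⟩
    simp only [cross_apply, Matrix.cons_val]
    linear_combination v 0 * hq - y 0 * hp
  have k20 : g ∣ u 2 * crossProduct v y 0 - u 0 * crossProduct v y 2 := by
    refine ⟨v 1 * q - y 1 * p, ?_⟩
    simp only [cross_apply, Matrix.cons_val]
    linear_combination v 1 * hq - y 1 * hp
  have k10 := (dvd_neg.2 k01)
  have k21 := (dvd_neg.2 k12)
  have k02 := (dvd_neg.2 k20)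
  rw [neg_sub] at k10 k21 k02
  have k : ∀ i, g ∣ u i * crossProduct v y i - u i * crossProduct v y i := by simp
  revert t
  revert s
  exact fin3 (fin3 (k 0) k01 k02) (fin3 k10 (k 1) k12) (fin3 k20 k21 (k 2))

lemma cross_cross_aux (n : S) (u v y : Fin 3 → S) (hv : ∑ t, v t * u t = 0)
    (hE : ∑ t, y t * u t = n) : crossProduct u (crossProduct v y) = n • v := by
  simp only [Fin.sum_univ_three] at hv hE
  funext t
  revert t
  refine fin3 ?_ ?_ ?_ <;> simp only [cross_apply, Matrix.cons_val, Pi.smul_apply, smul_eq_mul]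
  · linear_combination v 0 * hE - y 0 * hv
  · linear_combination v 1 * hE - y 1 * hv
  · linear_combination v 2 * hE - y 2 * hv

lemma cancel_aux (f : S) (hf : f ≠ 0) (d : ℂ) (hd : d ≠ 0) (u v : Fin 3 → S)
    (H : f • u = (C d * f) • v) : (C d⁻¹ : S) • u = v := by
  have hinv : (C d : S) * C d⁻¹ = 1 := by rw [← C_mul, mul_inv_cancel₀ hd, C_1]
  funext t
  have := congrFun H t
  simp only [Pi.smul_apply, smul_eq_mul] at this ⊢
  apply mul_left_cancel₀ hf
  linear_combination C d⁻¹ * this + f * v t * hinv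

lemma colinear_aux (f c0 : S) (hf : f ≠ 0) (d : ℂ) (hd : d ≠ 0) (u w y : Fin 3 → S)
    (hE : ∑ t, y t * u t = C d * f) (hc0 : ∑ t, y t * w t = f * c0)
    (hmul : 0 = crossProduct u w) (t : Fin 3) : w t = C d⁻¹ * c0 * u t := by
  have hdC : (C d : S) ≠ 0 := by simpa using hd
  have hinv : (C d : S) * C d⁻¹ = 1 := by rw [← C_mul, mul_inv_cancel₀ hd, C_1]
  have q0 := congrFun hmul 0
  have q1 := congrFun hmul 1
  have q2 := congrFun hmul 2
  simp only [cross_apply, Pi.zero_apply, Matrix.cons_val] at q0 q1 q2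
  simp only [Fin.sum_univ_three] at hc0 hE
  apply mul_left_cancel₀ (mul_ne_zero hdC hf)
  revert t
  refine fin3 ?_ ?_ ?_
  · linear_combination (-w 0) * hE + u 0 * hc0 + y 1 * q2 - y 2 * q1 - f * c0 * u 0 * hinv
  · linear_combination (-w 1) * hE + u 1 * hc0 + y 2 * q0 - y 0 * q2 - f * c0 * u 1 * hinv
  · linear_combination (-w 2) * hE + u 2 * hc0 + y 0 * q1 - y 1 * q0 - f * c0 * u 2 * hinv

lemma NC.surj (h : NC F e) (hm : 0 < m) (v : Fin 3 → S) (hv : v ∈ D0 (∏ i, F i)) :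
    ∃ x, Phi F x = v := by
  rw [mem_D0] at hv
  obtain ⟨d, hd, hE⟩ := h.euler
  replace hd := hd hm
  have h1 : ∀ j, F j ∣ ∑ t, v t * pderiv t (F j) := by
    intro j
    apply (h.rel_cof j).dvd_of_dvd_mul_left
    have e1 : ∑ i, cof F i * ∑ t, v t * pderiv t (F i) = 0 := by
      rw [← hv]
      simp only [pderiv_prod, Finset.mul_sum]
      rw [Finset.sum_comm]
      refine Finset.sum_congr rfl fun t _ => Finset.sum_congr rfl fun i _ => ?_
      ring
    rw [← Finset.add_sum_erase _ _ (Finset.mem_univ j)] at e1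
    rw [eq_neg_of_add_eq_zero_left e1, dvd_neg]
    apply Finset.dvd_sum
    intro i hi
    exact (dvd_cof (by
      rintro rfl
      simp at hi)).mul_right _
  have h2 : ∀ j, F j ∣ ∑ t, X t * pderiv t (F j) := by
    intro j
    rw [(h.hhom j).sum_X_mul_pderiv, nsmul_eq_mul]
    exact Dvd.intro_left _ rfl
  obtain ⟨a, b, hab⟩ := h.forms (crossProduct v X)
    (fun j => cross_dvd (F j) (grad (F j)) v X (h1 j) (h2 j))
  refine ⟨(C d⁻¹ : S) • (a, b), ?_⟩
  rw [map_smul]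
  have hmul := mul_Phi F a b
  rw [← hab, cross_cross_aux _ (grad (∏ i, F i)) v X hv hE] at hmul
  exact cancel_aux _ h.prod_ne_zero d hd _ _ hmul

/-- All relations between the generators. -/
lemma NC.relations (h : NC F e) (hm : 0 < m) (a : Fin 3 → S) (b : Fin m → S)
    (H : Phi F (a, b) = 0) :
    ∃ (c : S) (g : Fin m → S), (∀ j, b j = c - F j * g j) ∧ a = ∑ j, g j • grad (F j) := by
  obtain ⟨d, hd, hE⟩ := h.euler
  replace hd := hd hm
  have hmul := mul_Phi F a b
  rw [H, smul_zero] at hmul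
  set w := ((∏ i, F i) • a + ∑ j, (b j * cof F j) • grad (F j)) with hw
  -- `E · w = f * c₀`
  obtain ⟨c0, hc0⟩ : (∏ i, F i) ∣ ∑ t, X t * w t := by
    have : ∑ t, X t * w t = (∏ i, F i) * (∑ t, X t * a t) +
        ∑ j, b j * cof F j * ∑ t, X t * pderiv t (F j) := by
      simp only [hw, Pi.add_apply, Pi.smul_apply, smul_eq_mul, Finset.sum_apply, grad, mul_add,
        Finset.sum_add_distrib, Finset.mul_sum]
      refine congrArg₂ (· + ·) ?_ ?_
      · exact Finset.sum_congr rfl fun t _ => by ring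
      · rw [Finset.sum_comm]
        exact Finset.sum_congr rfl fun t _ => Finset.sum_congr rfl fun i _ => by ring
    rw [this]
    apply dvd_add (Dvd.intro _ rfl)
    apply Finset.dvd_sum
    intro j _
    rw [(h.hhom j).sum_X_mul_pderiv, nsmul_eq_mul, ← mul_cof F j]
    exact ⟨b j * (e j : S), by ring⟩
  have hwc : ∀ t, w t = C d⁻¹ * c0 * pderiv t (∏ i, F i) := by
    exact colinear_aux _ c0 h.prod_ne_zero d hd (grad (∏ i, F i)) w X hE hc0 hmul
  set c := C d⁻¹ * c0 with hc
  have hrel : ∀ t, (∏ i, F i) * a t = ∑ j, (c - b j) * cof F j * pderiv t (F j) := by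
    intro t
    have := hwc t
    rw [pderiv_prod] at this
    simp only [hw, Pi.add_apply, Pi.smul_apply, smul_eq_mul, Finset.sum_apply, grad] at this
    rw [Finset.mul_sum] at this
    rw [eq_sub_of_add_eq this, ← Finset.sum_sub_distrib]
    exact Finset.sum_congr rfl fun j _ => by ring
  have hdv : ∀ j, F j ∣ c - b j := by
    intro j
    apply dvd_of_dvd_mul_grad _ (h.hsmooth j)
    intro t
    apply (h.rel_cof j).dvd_of_dvd_mul_left
    have := hrel t
    rw [← Finset.add_sum_erase _ _ (Finset.mem_univ j)] at this
    have e1 : cof F j * ((c - b j) * pderiv t (F j)) = (∏ i, F i) * a t -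
      ∑ i ∈ Finset.univ.erase j, (c - b i) * cof F i * pderiv t (F i) := by
      linear_combination -this
    rw [e1]
    apply dvd_sub
    · exact (Finset.dvd_prod_of_mem F (Finset.mem_univ j)).mul_right _
    · apply Finset.dvd_sum
      intro i hi
      exact ((dvd_cof (by
        rintro rfl
        simp at hi)).mul_left _).mul_right _
  choose g hg using hdv
  refine ⟨c, g, fun j => by linear_combination -hg j, ?_⟩
  funext t
  apply mul_left_cancel₀ h.prod_ne_zero
  rw [hrel t]
  simp only [Finset.sum_apply, Pi.smul_apply, smul_eq_mul, grad, Finset.mul_sum]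
  refine Finset.sum_congr rfl fun j _ => ?_
  rw [hg j, ← mul_cof F j]
  ring

end NCAux
namespace NCAux

variable {m : ℕ} {F : Fin m → S} {e : Fin m → ℕ}

/-- The gradient at the origin. -/
noncomputable def al (F : Fin m → S) (j : Fin m) : Fin 3 → ℂ := fun t => eval 0 (pderiv t (F j))

/-- The indices of the lines. -/
def lines (e : Fin m → ℕ) : Finset (Fin m) := Finset.univ.filter (fun j => e j = 1)

lemma eval_zero_of_hom (p : S) (n : ℕ) (hn : n ≠ 0) (hp : p.IsHomogeneous n) : eval 0 p = 0 := by
  rw [eval_zero, constantCoeff_eq]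
  apply hp.coeff_eq_zero
  simpa using hn.symm

lemma NC.al_zero (h : NC F e) (j : Fin m) (hj : e j ≠ 1) : al F j = 0 := by
  funext t
  have := h.he j
  exact eval_zero_of_hom _ _ (by omega) (h.hhom j).pderiv

lemma NC.grad_line (h : NC F e) (j : Fin m) (hj : e j = 1) (t : Fin 3) :
    pderiv t (F j) = C (al F j t) := by
  have h1 := (h.hhom j).pderiv (i := t)
  rw [hj, Nat.sub_self, ← totalDegree_zero_iff_isHomogeneous, totalDegree_eq_zero_iff_eq_C] at h1
  rw [al, h1]
  simp

lemma NC.line_eq (h : NC F e) (j : Fin m) (hj : e j = 1) :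
    F j = ∑ t, X t * C (al F j t) := by
  have := (h.hhom j).sum_X_mul_pderiv
  rw [hj, one_smul] at this
  rw [← this]
  simp only [h.grad_line j hj]

lemma NC.not_unit (h : NC F e) (j : Fin m) : ¬ IsUnit (F j) := by
  intro hu
  have h1 := hu.map (eval (0 : Fin 3 → ℂ))
  rw [eval_zero_of_hom _ _ (by have := h.he j; omega) (h.hhom j)] at h1
  simp at h1

lemma NC.al_ne (h : NC F e) (j : Fin m) (hj : e j = 1) : al F j ≠ 0 := by
  intro h0
  apply h.ne_zero j
  rw [h.line_eq j hj, h0]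
  simp

lemma NC.al_indep (h : NC F e) (i j : Fin m) (hij : i ≠ j) (hi : e i = 1) (hj : e j = 1)
    (c : ℂ) (H : al F i = c • al F j) : False := by
  have h1 : F i = C c * F j := by
    rw [h.line_eq i hi, h.line_eq j hj, H, Finset.mul_sum]
    refine Finset.sum_congr rfl fun t _ => ?_
    simp only [Pi.smul_apply, smul_eq_mul, C_mul]
    ring
  exact h.not_unit j ((h.rel hij.symm).isUnit_of_dvd ⟨C c, by rw [h1, mul_comm]⟩)

lemma NC.linInd (h : NC F e) (hl : (lines e).card ≤ 2) :
    LinearIndepOn ℂ (al F) (lines e : Set (Fin m)) := by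
  have hmem : ∀ j, j ∈ lines e ↔ e j = 1 := fun j => by simp [lines]
  have hc : (lines e).card = 0 ∨ (lines e).card = 1 ∨ (lines e).card = 2 := by omega
  rcases hc with hc | hc | hc
  · rw [Finset.card_eq_zero] at hc
    rw [hc, Finset.coe_empty]
    exact linearIndepOn_empty _ _
  · obtain ⟨j, hj⟩ := Finset.card_eq_one.1 hc
    rw [hj, Finset.coe_singleton]
    exact LinearIndepOn.singleton (h.al_ne j ((hmem j).1 (by simp [hj])))
  · obtain ⟨i, j, hij, hL⟩ := Finset.card_eq_two.1 hc
    have hi : e i = 1 := (hmem i).1 (by simp [hL])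
    have hj : e j = 1 := (hmem j).1 (by simp [hL])
    rw [hL, Finset.coe_pair, LinearIndepOn.pair_iff _ hij]
    intro c d hcd
    by_cases hc0 : c = 0
    · subst hc0
      rw [zero_smul, zero_add, smul_eq_zero] at hcd
      exact ⟨rfl, hcd.resolve_right (h.al_ne j hj)⟩
    · exfalso
      refine h.al_indep i j hij hi hj (c⁻¹ * -d) ?_
      rw [mul_smul, neg_smul, ← eq_neg_of_add_eq_zero_left hcd, smul_smul, inv_mul_cancel₀ hc0,
        one_smul]

lemma NC.sum_rho (h : NC F e) : ∑ j, rho F j = 0 := by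
  have h1 := mul_Phi F 0 1
  have h2 : grad (∏ i, F i) = ∑ j, cof F j • grad (F j) := by
    funext t
    simp [grad, pderiv_prod]
  have h3 : (∏ i, F i) • (0 : Fin 3 → S) + ∑ j, ((1 : Fin m → S) j * cof F j) • grad (F j) =
      grad (∏ i, F i) := by
    rw [smul_zero, zero_add, h2]
    simp only [Pi.one_apply, one_mul]
  rw [h3, cross_self, Phi_apply, map_zero, zero_add] at h1
  simp only [Pi.one_apply, one_smul] at h1
  exact (smul_eq_zero.1 h1).resolve_left h.prod_ne_zero

/-- Constant vectors. -/
noncomputable def cst (u : Fin 3 → ℂ) : Fin 3 → S := fun t => C (u t)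

lemma NC.exists_gens (h : NC F e) (hm : 0 < m) (hl : (lines e).card ≤ 2) :
    ∃ T : Finset (Fin 3 → S), T.card ≤ m + 2 - (lines e).card ∧
      Submodule.span S (T : Set (Fin 3 → S)) = D0 (∏ i, F i) := by
  classical
  let A : Submodule ℂ (Fin 3 → ℂ) := Submodule.span ℂ (Set.range fun j : lines e => al F j)
  have hA : Module.finrank ℂ A = (lines e).card := by
    have h1 : LinearIndependent ℂ (fun j : lines e => al F j) := h.linInd hl
    rw [finrank_span_eq_card h1]
    simp
  obtain ⟨B, hAB⟩ := A.exists_isCompl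
  have hB := Submodule.finrank_add_eq_of_isCompl hAB
  rw [hA, Module.finrank_fin_fun] at hB
  let bB := Module.finBasis ℂ B
  let j0 : Fin m := ⟨0, hm⟩
  let s : (Fin 3 → ℂ) → (Fin 3 → S) := fun u => crossProduct (grad (∏ i, F i)) (cst u)
  let T : Finset (Fin 3 → S) :=
    Finset.univ.image (fun i => s (bB i)) ∪ (Finset.univ.erase j0).image (rho F)
  refine ⟨T, ?_, ?_⟩
  · have h1 : T.card ≤ _ := Finset.card_union_le _ _
    have h2 : (Finset.univ.image (fun i => s (bB i))).card ≤ Module.finrank ℂ B := by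
      refine Finset.card_image_le.trans ?_
      simp
    have h3 : ((Finset.univ.erase j0).image (rho F)).card ≤ m - 1 := by
      refine Finset.card_image_le.trans ?_
      simp
    omega
  · have hrho0 : ∀ j, j ≠ j0 → rho F j ∈ Submodule.span S (T : Set (Fin 3 → S)) := by
      intro j hj
      apply Submodule.subset_span
      rw [Finset.mem_coe]
      exact Finset.mem_union_right _ (Finset.mem_image_of_mem _ (by simp [hj]))
    have hrho : ∀ j, rho F j ∈ Submodule.span S (T : Set (Fin 3 → S)) := by
      intro j
      by_cases hj : j = j0
      · have h1 := h.sum_rho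
        rw [← Finset.add_sum_erase _ _ (Finset.mem_univ j)] at h1
        rw [eq_neg_of_add_eq_zero_left h1]
        apply Submodule.neg_mem
        apply Submodule.sum_mem
        intro i hi
        apply hrho0
        rw [← hj]
        simpa using hi
      · exact hrho0 j hj
    let Q : Submodule ℂ (Fin 3 → ℂ) :=
      { carrier := {u | s u ∈ Submodule.span S (T : Set (Fin 3 → S))}
        add_mem' := by
          intro u v hu hv
          have : s (u + v) = s u + s v := by
            simp only [s]
            rw [← map_add]
            congr 1
            funext t
            simp [cst]
          change s (u + v) ∈ Submodule.span S (T : Set (Fin 3 → S))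
          rw [this]
          exact Submodule.add_mem _ hu hv
        zero_mem' := by
          have : s 0 = 0 := by
            have : cst 0 = 0 := by
              funext t
              simp [cst]
            simp only [s, this, map_zero]
          change s 0 ∈ Submodule.span S (T : Set (Fin 3 → S))
          rw [this]
          exact Submodule.zero_mem _
        smul_mem' := by
          intro c u hu
          have : s (c • u) = (C c : S) • s u := by
            simp only [s]
            rw [← map_smul]
            congr 1
            funext t
            simp [cst]
          change s (c • u) ∈ Submodule.span S (T : Set (Fin 3 → S))
          rw [this]
          exact Submodule.smul_mem _ _ hu }
    have hQ : ∀ u, u ∈ Q ↔ s u ∈ Submodule.span S (T : Set (Fin 3 → S)) := fun _ => Iff.rfl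
    have hAQ : A ≤ Q := by
      rw [Submodule.span_le]
      rintro _ ⟨⟨j, hj⟩, rfl⟩
      have hj1 : e j = 1 := by simpa [lines] using hj
      rw [SetLike.mem_coe, hQ]
      have : cst (al F j) = grad (F j) := by
        funext t
        rw [grad, h.grad_line j hj1]
        rfl
      simp only [s]
      rw [this, ← mul_rho]
      exact Submodule.smul_mem _ _ (hrho j)
    have hBQ : B ≤ Q := by
      intro u hu
      have h1 := bB.sum_repr ⟨u, hu⟩
      have h2 : u = ∑ i, bB.repr ⟨u, hu⟩ i • (bB i : Fin 3 → ℂ) := by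
        have := congrArg Subtype.val h1
        rw [Submodule.coe_sum] at this
        exact this.symm
      rw [h2]
      apply Submodule.sum_mem
      intro i _
      apply Submodule.smul_mem
      rw [hQ]
      apply Submodule.subset_span
      rw [Finset.mem_coe]
      exact Finset.mem_union_left _ (Finset.mem_image_of_mem (fun i => s (bB i)) (Finset.mem_univ i))
    have htop : ∀ u, u ∈ Q := by
      intro u
      have : (⊤ : Submodule ℂ (Fin 3 → ℂ)) ≤ Q := by
        rw [← hAB.sup_eq_top]
        exact sup_le hAQ hBQ
      exact this trivial
    apply le_antisymm
    · rw [Submodule.span_le]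
      intro v hv
      rw [SetLike.mem_coe]
      rw [Finset.mem_coe, Finset.mem_union] at hv
      rcases hv with hv | hv
      · obtain ⟨i, -, rfl⟩ := Finset.mem_image.1 hv
        have := h.Phi_mem (cst (bB i), 0)
        rw [Phi_apply] at this
        simpa [s] using this
      · obtain ⟨i, -, rfl⟩ := Finset.mem_image.1 hv
        have := h.Phi_mem (0, Pi.single i 1)
        rw [Phi_apply, map_zero, zero_add] at this
        have h5 : ∑ j, (Pi.single i 1 : Fin m → S) j • rho F j = rho F i := by
          rw [Finset.sum_eq_single i]
          · simp
          · intro j _ hj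
            simp [hj]
          · simp
        rwa [h5] at this
    · intro v hv
      obtain ⟨⟨a, b⟩, rfl⟩ := h.surj hm v hv
      rw [Phi_apply]
      apply Submodule.add_mem
      · have ha : a = ∑ t, a t • cst (Pi.single t 1) := by
          funext k
          simp only [Finset.sum_apply, Pi.smul_apply, smul_eq_mul, cst]
          rw [Finset.sum_eq_single k]
          · simp
          · intro t _ ht
            simp [ht.symm]
          · simp
        rw [ha, map_sum]
        apply Submodule.sum_mem
        intro t _
        rw [map_smul]
        exact Submodule.smul_mem _ _ ((hQ _).1 (htop (Pi.single t 1)))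
      · apply Submodule.sum_mem
        intro j _
        exact Submodule.smul_mem _ _ (hrho j)

/-- Evaluation at the origin. -/
noncomputable def ev (m : ℕ) : ((Fin 3 → S) × (Fin m → S)) →ₛₗ[eval (0 : Fin 3 → ℂ)]
    ((Fin 3 → ℂ) × (Fin m → ℂ)) where
  toFun x := (fun t => eval 0 (x.1 t), fun j => eval 0 (x.2 j))
  map_add' x y := by
    ext <;> simp
  map_smul' c x := by
    ext <;> simp

lemma NC.lower (h : NC F e) (hm : 0 < m) (T : Finset (Fin 3 → S))
    (hT : Submodule.span S (T : Set (Fin 3 → S)) = D0 (∏ i, F i)) :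
    m + 2 - (lines e).card ≤ T.card := by
  classical
  have h1 : ∀ v : Fin 3 → S, ∃ x, v ∈ D0 (∏ i, F i) → Phi F x = v := by
    intro v
    by_cases hv : v ∈ D0 (∏ i, F i)
    · obtain ⟨x, hx⟩ := h.surj hm v hv
      exact ⟨x, fun _ => hx⟩
    · exact ⟨0, fun hh => absurd hh hv⟩
  choose lift hlift using h1
  let U : Finset ((Fin 3 → ℂ) × (Fin m → ℂ)) :=
    T.image (fun v => ev m (lift v)) ∪
      insert (0, fun _ => 1) ((lines e).image fun j => (al F j, 0))
  have hcard : U.card ≤ T.card + ((lines e).card + 1) := by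
    refine (Finset.card_union_le _ _).trans (add_le_add Finset.card_image_le ?_)
    exact (Finset.card_insert_le _ _).trans (by
      have := Finset.card_image_le (s := lines e) (f := fun j => ((al F j, 0) :
        (Fin 3 → ℂ) × (Fin m → ℂ)))
      omega)
  have hU0 : ((0, fun _ => 1) : (Fin 3 → ℂ) × (Fin m → ℂ)) ∈ Submodule.span ℂ (U : Set _) := by
    apply Submodule.subset_span
    rw [Finset.mem_coe]
    exact Finset.mem_union_right _ (Finset.mem_insert_self _ _)
  have hU1 : ∀ j, ((al F j, 0) : (Fin 3 → ℂ) × (Fin m → ℂ)) ∈ Submodule.span ℂ (U : Set _) := by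
    intro j
    by_cases hj : e j = 1
    · apply Submodule.subset_span
      rw [Finset.mem_coe]
      exact Finset.mem_union_right _ (Finset.mem_insert_of_mem
        (Finset.mem_image_of_mem (fun j => ((al F j, 0) : (Fin 3 → ℂ) × (Fin m → ℂ)))
          (by simp [lines, hj])))
    · rw [h.al_zero j hj]
      exact Submodule.zero_mem _
  have hspan : Submodule.span ℂ (U : Set ((Fin 3 → ℂ) × (Fin m → ℂ))) = ⊤ := by
    rw [eq_top_iff]
    rintro ⟨p, q⟩ -
    let x : (Fin 3 → S) × (Fin m → S) := (fun t => C (p t), fun j => C (q j))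
    have hx : ev m x = (p, q) := by
      simp [ev, x]
    have hmem := h.Phi_mem x
    rw [← hT] at hmem
    obtain ⟨c, -, hc⟩ := Submodule.mem_span_finset.1 hmem
    have hy : Phi F (x - ∑ v ∈ T, c v • lift v) = 0 := by
      rw [map_sub, map_sum, ← hc, sub_eq_zero]
      refine Finset.sum_congr rfl fun v hv => ?_
      rw [map_smul, hlift v]
      rw [← hT]
      exact Submodule.subset_span hv
    obtain ⟨k, g, hb, ha⟩ := h.relations hm (x - ∑ v ∈ T, c v • lift v).1
      (x - ∑ v ∈ T, c v • lift v).2 hy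
    have hevy : ev m (x - ∑ v ∈ T, c v • lift v) ∈ Submodule.span ℂ (U : Set _) := by
      have e1 : ev m (x - ∑ v ∈ T, c v • lift v) = eval 0 k • ((0, fun _ => 1) :
          (Fin 3 → ℂ) × (Fin m → ℂ)) + ∑ j, eval 0 (g j) • ((al F j, 0) :
          (Fin 3 → ℂ) × (Fin m → ℂ)) := by
        have e2 : ∀ y, ev m y = (fun t => eval 0 (y.1 t), fun j => eval 0 (y.2 j)) :=
          fun _ => rfl
        rw [e2, ha]
        simp only [hb]
        refine Prod.ext ?_ ?_
        · funext t
          simp [Prod.fst_sum, al, grad]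
        · funext j
          have := eval_zero_of_hom _ _ (by have := h.he j; omega) (h.hhom j)
          rw [eval_zero] at this
          simp [Prod.snd_sum, this]
      rw [e1]
      exact Submodule.add_mem _ (Submodule.smul_mem _ _ hU0)
        (Submodule.sum_mem _ fun j _ => Submodule.smul_mem _ _ (hU1 j))
    rw [map_sub, hx, map_sum] at hevy
    have hs : ∑ v ∈ T, ev m (c v • lift v) ∈ Submodule.span ℂ (U : Set _) := by
      apply Submodule.sum_mem
      intro v hv
      rw [LinearMap.map_smulₛₗ]
      apply Submodule.smul_mem
      apply Submodule.subset_span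
      rw [Finset.mem_coe]
      exact Finset.mem_union_left _ (Finset.mem_image_of_mem (fun v => ev m (lift v)) hv)
    have := Submodule.add_mem _ hevy hs
    rwa [sub_add_cancel] at this
  have hfin : Module.finrank ℂ ((Fin 3 → ℂ) × (Fin m → ℂ)) ≤ U.card := by
    have := finrank_span_finset_le_card (R := ℂ) U
    rw [Set.finrank, hspan, finrank_top] at this
    exact this
  rw [Module.finrank_prod, Module.finrank_fin_fun, Module.finrank_fin_fun] at hfin
  omega

end NCAux

/-- if `ℓ(C) ≤ 2` then the minimal number of generators of the `S`-module
`D₀(f)` is exactly `m + 2 − ℓ(C)`: `C` is an `s`-syzygy curve with `s = m + 2 − ℓ(C)`. -/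
theorem numGenerators_of_ell_le_two
    (m : ℕ) (hm : 4 ≤ m) (F : Fin m → S) (e : Fin m → ℕ)
    (he : ∀ j, 1 ≤ e j)
    (hhom : ∀ j, (F j).IsHomogeneous (e j))
    (hsmooth : ∀ j, ∀ p : Fin 3 → ℂ,
      (∀ t, eval p (pderiv t (F j)) = 0) → p = 0)
    (hnc : ∀ i j : Fin m, i ≠ j → ∀ p : Fin 3 → ℂ, p ≠ 0 →
      eval p (F i) = 0 → eval p (F j) = 0 →
      LinearIndependent ℂ
        ![fun t => eval p (pderiv t (F i)), fun t => eval p (pderiv t (F j))])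
    (htriple : ∀ i j k : Fin m, i ≠ j → i ≠ k → j ≠ k → ∀ p : Fin 3 → ℂ, p ≠ 0 →
      ¬(eval p (F i) = 0 ∧ eval p (F j) = 0 ∧ eval p (F k) = 0))
    (hl : (Finset.univ.filter (fun j => e j = 1)).card ≤ 2) :
    IsLeast {n : ℕ | ∃ T : Finset (Fin 3 → S),
        T.card = n ∧ Submodule.span S (T : Set (Fin 3 → S)) = D0 (∏ i, F i)}
      (m + 2 - (Finset.univ.filter (fun j => e j = 1)).card) := by
  have h : NCAux.NC F e := ⟨he, hhom, hsmooth, hnc, htriple⟩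
  have hm0 : 0 < m := by omega
  constructor
  · obtain ⟨T, hT, hs⟩ := h.exists_gens hm0 hl
    exact ⟨T, le_antisymm hT (h.lower hm0 T hs), hs⟩
  · rintro n ⟨T, rfl, hs⟩
    exact h.lower hm0 T hs
end

section
/- Assume ℓ(C) = 1 with f_1 = x (so e_1 = 1 and e_j ≥ 2 for j ≥ 2). Let φ : S^{m+1} → S³ be the S-linear map φ(A_1,...,A_{m−1},b,c) = Σ_{j=1}^{m−1} A_j ρ_j + b σ^y + c σ^z. Then the kernel of φ is a free S-module with basis R_2,...,R_m, where for 2 ≤ j ≤ m−1 the vector R_j ∈ S^{m+1} has −x·f_{j,x} in position 1, f_j in position j, zero in the other positions among the first m−1, and (−f_{j,y}, −f_{j,z}) in the last two positions, and R_m has −f_m − x·f_{m,x} in position 1, −f_m in positions 2 through m−1, and (−f_{m,y}, −f_{m,z}) in the last two positions. That is, ker φ equals the S-submodule generated by R_2,...,R_m, and R_2,...,R_m are linearly independent over S. -/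
open MvPolynomial

/-- The second-syzygy vectors `R_2, …, R_m ∈ S^{m+1}` (case `ℓ(C) = 1`, `f_1 = x`); the
index `a : Fin (m−1)` corresponds to `R_{a+2}`. For `2 ≤ j ≤ m−1`, `R_j` has `−x f_{j,x}`
in position 1, `f_j` in position `j`, zeros elsewhere among the first `m−1` coordinates and
`(−f_{j,y}, −f_{j,z})` in the last two; `R_m` has `−f_m − x f_{m,x}` in position 1, `−f_m`
in positions 2,…,m−1 and `(−f_{m,y}, −f_{m,z})` in the last two. -/
noncomputable def Rvec1 {m : ℕ} (F : Fin m → S) (a : Fin (m - 1)) : (Fin (m - 1) ⊕ Fin 2) → S :=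
  let j : Fin m := ⟨(a : ℕ) + 1, by have := a.isLt; omega⟩
  Sum.elim
    (fun k => (if (k : ℕ) = 0 then -(X 0 * pderiv 0 (F j)) else 0)
      + (if (k : ℕ) = (j : ℕ) then F j else 0)
      + (if (j : ℕ) = m - 1 then -F j else 0))
    (fun t => -pderiv t.succ (F j))


namespace KL1

lemma relprime_X : IsRelPrime (X 0 : S) (X 1) := by
  have h : Irreducible (X 0 : S) := (MvPolynomial.X_prime (i := (0 : Fin 3)) (R := ℂ)).irreducible
  rw [h.isRelPrime_iff_not_dvd, MvPolynomial.X_dvd_X]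
  decide

lemma dvd_of_two {a u p q : S} (h : IsRelPrime p q) (hp : a ∣ u * p) (hq : a ∣ u * q) : a ∣ u := by
  classical
  let _ : GCDMonoid S := UniqueFactorizationMonoid.toGCDMonoid S
  have h1 : a ∣ gcd (u * p) (u * q) := dvd_gcd hp hq
  have h2 : IsUnit (gcd p q) := gcd_isUnit_iff_isRelPrime.2 h
  have h3 := h1.trans (gcd_mul_left' u p q).dvd
  exact h2.dvd_mul_right.1 h3

lemma X_mem_rad (I : Ideal S) (h : ∀ p : Fin 3 → ℂ, (∀ q ∈ I, eval p q = 0) → p = 0) (t : Fin 3) :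
    (X t : S) ∈ I.radical := by
  rw [← vanishingIdeal_zeroLocus_eq_radical (K := ℂ)]
  intro p hp
  have := h p (fun q hq => by simpa [aeval_eq_eval] using hp q hq)
  simp [this]

lemma exists_zero (π : S) (hπ : ¬ IsUnit π) : ∃ p : Fin 3 → ℂ, p ≠ 0 ∧ eval p π = 0 := by
  by_contra! hcon
  have key := X_mem_rad (Ideal.span {π}) (fun p hp => by
    by_contra hne
    exact hcon p hne (hp π (Ideal.mem_span_singleton_self π)))
  obtain ⟨a, ha⟩ := key 0
  obtain ⟨b, hb⟩ := key 1
  rw [Ideal.mem_span_singleton] at ha hb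
  exact hπ ((relprime_X.pow (m := a) (n := b)) ha hb)

lemma dvd_of_grad (g u : S)
    (hs : ∀ p : Fin 3 → ℂ, (∀ t, eval p (pderiv t g) = 0) → p = 0)
    (h : ∀ t, g ∣ u * pderiv t g) : g ∣ u := by
  have key := X_mem_rad (Ideal.span (Set.range fun t => pderiv t g)) (fun p hp => hs p (fun t =>
    hp _ (Ideal.subset_span ⟨t, rfl⟩)))
  have h2 : ∀ q ∈ Ideal.span (Set.range fun t => pderiv t g), g ∣ u * q := by
    intro q hq
    induction hq using Submodule.span_induction with
    | mem x hx => obtain ⟨t, rfl⟩ := hx; exact h t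
    | zero => simp
    | add x y _ _ hx hy => rw [mul_add]; exact dvd_add hx hy
    | smul a x _ hx => rw [smul_eq_mul, mul_left_comm]; exact hx.mul_left a
  obtain ⟨a, ha⟩ := key 0
  obtain ⟨b, hb⟩ := key 1
  exact dvd_of_two (relprime_X.pow (m := a) (n := b)) (h2 _ ha) (h2 _ hb)

lemma relprime_of_nc (g h : S)
    (hnc : ∀ p : Fin 3 → ℂ, p ≠ 0 → eval p g = 0 → eval p h = 0 →
      LinearIndependent ℂ ![fun t => eval p (pderiv t g), fun t => eval p (pderiv t h)]) :
    IsRelPrime g h := by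
  rintro π ⟨a, rfl⟩ ⟨b, rfl⟩
  by_contra hu
  obtain ⟨p, hp, hz⟩ := exists_zero π hu
  have := hnc p hp (by simp [hz]) (by simp [hz])
  have hi : LinearIndependent ℂ ![eval p a • (fun t => eval p (pderiv t π)),
      eval p b • (fun t => eval p (pderiv t π))] := by
    convert this using 2
    · ext t; simp [hz]
    · congr 1; ext t; simp [hz]
  rw [LinearIndependent.pair_iff] at hi
  have h1 := hi (eval p b) (- eval p a) (by ext t; simp; ring)
  have h2 := hi 1 0 (by ext t; simp at h1; simp [h1])
  simp at h2

lemma pderiv_prod {ι : Type*} [Fintype ι] [DecidableEq ι] (F : ι → S) (t : Fin 3) :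
    pderiv t (∏ i, F i) = ∑ i, (∏ k ∈ Finset.univ.erase i, F k) * pderiv t (F i) := by
  have : ∀ s : Finset ι, pderiv t (∏ i ∈ s, F i) =
      ∑ i ∈ s, (∏ k ∈ s.erase i, F k) * pderiv t (F i) := by
    intro s
    induction s using Finset.induction_on with
    | empty => simp
    | insert a s ha ih =>
      rw [Finset.prod_insert ha, Derivation.leibniz, ih, Finset.sum_insert ha,
        Finset.erase_insert ha, add_comm, smul_eq_mul, smul_eq_mul, Finset.mul_sum]
      congr 1
      · apply Finset.sum_congr rfl
        intro i hi
        have : i ≠ a := by rintro rfl; exact ha hi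
        rw [Finset.erase_insert_of_ne this.symm, Finset.prod_insert (by simp [ha]), mul_assoc]
  exact this _

variable {n : ℕ}

/-- complementary product -/
noncomputable def cop (F : Fin (n+1) → S) (j : Fin (n+1)) : S := ∏ k ∈ Finset.univ.erase j, F k

lemma mul_cop (F : Fin (n+1) → S) (j : Fin (n+1)) : F j * cop F j = ∏ i, F i :=
  Finset.mul_prod_erase _ _ (Finset.mem_univ j)

lemma grad_prod (F : Fin (n+1) → S) : grad (∏ i, F i) = ∑ i, cop F i • grad (F i) := by
  ext1 t
  simp [grad, pderiv_prod, cop, Finset.sum_apply]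

lemma F_rho (F : Fin (n+1) → S) (j : Fin (n+1)) :
    F j • rho F j = crossProduct (grad (∏ i, F i)) (grad (F j)) := by
  rw [grad_prod, map_sum, LinearMap.sum_apply, ← Finset.add_sum_erase _ _ (Finset.mem_univ j)]
  rw [rho, Finset.smul_sum, map_smul, LinearMap.smul_apply, cross_self, smul_zero, zero_add]
  apply Finset.sum_congr rfl
  intro i hi
  rw [map_smul, LinearMap.smul_apply, smul_smul]
  congr 1
  rw [cop, Finset.erase_right_comm]
  refine Finset.mul_prod_erase _ _ ?_
  simp at hi ⊢
  exact fun h => hi h.symm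

lemma f_rho (F : Fin (n+1) → S) (j : Fin (n+1)) :
    (∏ i, F i) • rho F j = crossProduct (grad (∏ i, F i)) (cop F j • grad (F j)) := by
  rw [map_smul, ← F_rho, smul_smul, mul_comm, mul_cop]

/-- the polynomial 1-form `f η` -/
noncomputable def w (F : Fin (n+1) → S) (A : Fin n ⊕ Fin 2 → S) : Fin 3 → S :=
  (∑ j : Fin n, A (Sum.inl j) • cop F j.castSucc • grad (F j.castSucc))
    + (∏ i, F i) • ![0, A (Sum.inr 0), A (Sum.inr 1)]

noncomputable def phi (F : Fin (n+1) → S) (A : Fin n ⊕ Fin 2 → S) : Fin 3 → S :=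
  (∑ j : Fin n, A (Sum.inl j) • rho F j.castSucc)
          + A (Sum.inr 0) • sigy (∏ i, F i) + A (Sum.inr 1) • sigz (∏ i, F i)

lemma f_phi (F : Fin (n+1) → S) (A : Fin n ⊕ Fin 2 → S) :
    (∏ i, F i) • phi F A = crossProduct (grad (∏ i, F i)) (w F A) := by
  have h : A (Sum.inr 0) • sigy (∏ i, F i) + A (Sum.inr 1) • sigz (∏ i, F i)
      = crossProduct (grad (∏ i, F i)) ![0, A (Sum.inr 0), A (Sum.inr 1)] := by
    rw [cross_apply]
    ext1 t
    fin_cases t <;> simp [sigy, sigz, grad] <;> ring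
  rw [phi, add_assoc, h, w, map_add, map_smul, smul_add, map_sum, Finset.smul_sum]
  congr 1
  apply Finset.sum_congr rfl
  intro j _
  rw [map_smul, ← f_rho, smul_comm]

lemma phi_zero_iff (F : Fin (n+1) → S) (hF : ∀ i, F i ≠ 0) (A : Fin n ⊕ Fin 2 → S) :
    phi F A = 0 ↔ crossProduct (grad (∏ i, F i)) (w F A) = 0 := by
  rw [← f_phi, smul_eq_zero, or_iff_right (Finset.prod_ne_zero_iff.2 fun i _ => hF i)]

/-- the second syzygies, with index types simplified -/
noncomputable def Rn (F : Fin (n+1) → S) : Fin n → (Fin n ⊕ Fin 2 → S) := Rvec1 (m := n+1) F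

lemma R_inl (F : Fin (n+1) → S) (hn : 0 < n) (hF0 : F 0 = X 0) (B : Fin (n+1) → S)
    (hB : B 0 = - ∑ a : Fin n, B a.succ * pderiv 0 (F a.succ)) (k : Fin n) :
    (∑ a : Fin n, B a.succ • Rn F a) (Sum.inl k)
      = F k.castSucc * B k.castSucc - F (Fin.last n) * B (Fin.last n) := by
  have h2 : ∀ j : Fin (n+1), j ≠ 0 → ∑ a : Fin n, (if a.succ = j then B a.succ * F a.succ else 0)
      = B j * F j := by
    intro j hj
    obtain ⟨i, rfl⟩ := Fin.exists_succ_eq.2 hj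
    simp [Fin.succ_inj]
  have h3 : ∑ a : Fin n, (if a.succ = Fin.last n then B a.succ * F a.succ else 0)
      = B (Fin.last n) * F (Fin.last n) := h2 _ (by simp [Fin.ext_iff]; omega)
  have e : ∀ a : Fin n, (B a.succ • Rn F a) (Sum.inl k) =
      (if (k : ℕ) = 0 then - X 0 * (B a.succ * pderiv 0 (F a.succ)) else 0)
      + (if a.succ = k.castSucc then B a.succ * F a.succ else 0)
      - (if a.succ = Fin.last n then B a.succ * F a.succ else 0) := by
    intro a
    have c1 : ((k : ℕ) = (a : ℕ) + 1) ↔ a.succ = k.castSucc := by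
      simp [Fin.ext_iff]; omega
    have c2 : ((a : ℕ) + 1 = n + 1 - 1) ↔ a.succ = Fin.last n := by
      simp [Fin.ext_iff]
    have c3 : (⟨(a : ℕ) + 1, by omega⟩ : Fin (n+1)) = a.succ := rfl
    simp only [Rn, Rvec1, Pi.smul_apply, Sum.elim_inl, smul_eq_mul, c1, c2, c3]
    split_ifs <;> ring
  rw [Finset.sum_apply, Finset.sum_congr rfl (fun a _ => e a), Finset.sum_sub_distrib,
    Finset.sum_add_distrib, h3]
  by_cases hk : (k : ℕ) = 0
  · have hk' : k.castSucc = 0 := by simp [Fin.ext_iff, hk]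
    simp only [hk, if_true, hk', Fin.succ_ne_zero, if_false, Finset.sum_const_zero,
      ← Finset.mul_sum, hF0, hB]
    ring
  · rw [h2 _ (by simpa [Fin.ext_iff] using hk)]
    simp only [hk, if_false, Finset.sum_const_zero]
    ring

lemma R_inr (F : Fin (n+1) → S) (B : Fin (n+1) → S) (t : Fin 2) :
    (∑ a : Fin n, B a.succ • Rn F a) (Sum.inr t)
      = - ∑ a : Fin n, B a.succ * pderiv t.succ (F a.succ) := by
  rw [Finset.sum_apply, ← Finset.sum_neg_distrib]
  apply Finset.sum_congr rfl
  intro a _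
  have c3 : (⟨(a : ℕ) + 1, by omega⟩ : Fin (n+1)) = a.succ := rfl
  simp only [Rn, Rvec1, Pi.smul_apply, Sum.elim_inr, smul_eq_mul, c3]
  ring

lemma w_apply (F : Fin (n+1) → S) (A : Fin n ⊕ Fin 2 → S) (t : Fin 3) :
    w F A t = (∑ j : Fin n, A (Sum.inl j) * (cop F j.castSucc * pderiv t (F j.castSucc)))
      + (∏ i, F i) * (![0, A (Sum.inr 0), A (Sum.inr 1)] : Fin 3 → S) t := by
  simp only [w, grad, Pi.add_apply, Finset.sum_apply, Pi.smul_apply, smul_eq_mul]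

lemma vec_R (F : Fin (n+1) → S) (hF0 : F 0 = X 0) (B : Fin (n+1) → S)
    (hB : B 0 = - ∑ a : Fin n, B a.succ * pderiv 0 (F a.succ)) (A : Fin n ⊕ Fin 2 → S)
    (hA : ∀ t : Fin 2, A (Sum.inr t) = - ∑ a : Fin n, B a.succ * pderiv t.succ (F a.succ))
    (t : Fin 3) :
    (![0, A (Sum.inr 0), A (Sum.inr 1)] : Fin 3 → S) t = - ∑ j, B j * pderiv t (F j) := by
  rw [Fin.sum_univ_succ, hF0]
  fin_cases t
  · simp [hB]
  · simp [hA, pderiv_X]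
  · simp [hA, pderiv_X]

lemma pderiv_f (F : Fin (n+1) → S) (t : Fin 3) :
    pderiv t (∏ i, F i) = (∑ j : Fin n, cop F j.castSucc * pderiv t (F j.castSucc))
      + cop F (Fin.last n) * pderiv t (F (Fin.last n)) := by
  rw [pderiv_prod, Fin.sum_univ_castSucc]; rfl

lemma w_R (F : Fin (n+1) → S) (hn : 0 < n) (hF0 : F 0 = X 0) (B : Fin (n+1) → S)
    (hB : B 0 = - ∑ a : Fin n, B a.succ * pderiv 0 (F a.succ)) :
    w F (∑ a : Fin n, B a.succ • Rn F a)
      = (- (F (Fin.last n) * B (Fin.last n))) • grad (∏ i, F i) := by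
  ext1 t
  rw [w_apply, vec_R F hF0 B hB _ (R_inr F B)]
  simp only [R_inl F hn hF0 B hB, Pi.smul_apply, smul_eq_mul, grad, pderiv_f]
  rw [Fin.sum_univ_castSucc, mul_add, Finset.mul_sum, mul_neg, mul_add, Finset.mul_sum, neg_add,
    ← add_assoc, ← Finset.sum_neg_distrib, ← Finset.sum_add_distrib]
  congr 1
  · apply Finset.sum_congr rfl
    intro j _
    rw [← mul_cop F j.castSucc]; ring
  · rw [← mul_cop F (Fin.last n)]; ring

lemma cross_comm {u v : Fin 3 → S} (h : crossProduct u v = 0) (s t : Fin 3) :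
    u s * v t = u t * v s := by
  rw [cross_apply] at h
  have h0 := congrFun h 0
  have h1 := congrFun h 1
  have h2 := congrFun h 2
  simp at h0 h1 h2
  fin_cases s <;> fin_cases t <;> simp <;> grind

set_option maxHeartbeats 4000000 in
theorem main (F : Fin (n+1) → S) (e : Fin (n+1) → ℕ) (hn : 0 < n)
    (he : ∀ j, 1 ≤ e j)
    (hhom : ∀ j, (F j).IsHomogeneous (e j))
    (hsmooth : ∀ j, ∀ p : Fin 3 → ℂ, (∀ t, eval p (pderiv t (F j)) = 0) → p = 0)
    (hnc : ∀ i j : Fin (n+1), i ≠ j → ∀ p : Fin 3 → ℂ, p ≠ 0 →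
      eval p (F i) = 0 → eval p (F j) = 0 →
      LinearIndependent ℂ
        ![fun t => eval p (pderiv t (F i)), fun t => eval p (pderiv t (F j))])
    (hF0 : F 0 = X 0) :
    {A : (Fin n ⊕ Fin 2) → S | phi F A = 0}
      = (Submodule.span S (Set.range (Rn F)) : Set ((Fin n ⊕ Fin 2) → S)) ∧
    LinearIndependent S (Rn F) := by
  have hF : ∀ i, F i ≠ 0 := by
    intro i h
    have := congrFun (hsmooth i 1 (by simp [h])) 0
    simp at this
  have hf : (∏ i, F i) ≠ 0 := Finset.prod_ne_zero_iff.2 fun i _ => hF i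
  have hcop : ∀ j, IsRelPrime (F j) (cop F j) := fun j =>
    IsRelPrime.prod_right fun i hi =>
      relprime_of_nc _ _ (hnc j i (by simp at hi; exact fun h => hi h.symm))
  have euler : ∀ j, ∑ t : Fin 3, X t * pderiv t (F j) = (e j : S) * F j := by
    intro j; simpa using (hhom j).sum_X_mul_pderiv
  refine ⟨?_, ?_⟩
  · ext A
    rw [Set.mem_ofPred_eq, SetLike.mem_coe, phi_zero_iff F hF]
    constructor
    · intro h
      have hc := cross_comm h
      set f := ∏ i, F i with hfdef
      have hfh : f.IsHomogeneous (∑ i, e i) := IsHomogeneous.prod _ _ _ fun i _ => hhom i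
      set d := ∑ i, e i with hd
      have hd0 : (d : ℂ) ≠ 0 := by
        have : 1 ≤ d := (he 0).trans (Finset.single_le_sum (f := e) (by simp) (Finset.mem_univ 0))
        exact_mod_cast (by omega : d ≠ 0)
      have hfe : ∑ t : Fin 3, X t * pderiv t f = (d : S) * f := by
        simpa using hfh.sum_X_mul_pderiv
      -- contraction with the Euler field
      obtain ⟨G, hG⟩ : ∃ G, ∑ t : Fin 3, X t * w F A t = f * G := by
        refine ⟨∑ j : Fin n, A (Sum.inl j) * e j.castSucc
          + ∑ t : Fin 3, X t * (![0, A (Sum.inr 0), A (Sum.inr 1)] : Fin 3 → S) t, ?_⟩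
        simp only [w_apply, mul_add, Finset.sum_add_distrib, Finset.mul_sum]
        refine congrArg₂ HAdd.hAdd ?_ ?_
        · rw [Finset.sum_comm]
          apply Finset.sum_congr rfl
          intro j _
          have := euler j.castSucc
          rw [hfdef, ← mul_cop F j.castSucc]
          calc _ = A (Sum.inl j) * cop F j.castSucc
                * ∑ t : Fin 3, X t * pderiv t (F j.castSucc) := by
                rw [Finset.mul_sum]; apply Finset.sum_congr rfl; intros; ring
            _ = _ := by rw [this]; ring
        · apply Finset.sum_congr rfl; intros; ring
      have hw : ∀ s, (d : S) * w F A s = G * pderiv s f := by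
        intro s
        apply mul_left_cancel₀ hf
        calc f * ((d : S) * w F A s) = (∑ t : Fin 3, X t * pderiv t f) * w F A s := by
              rw [hfe]; ring
          _ = (∑ t : Fin 3, X t * w F A t) * pderiv s f := by
              rw [Finset.sum_mul, Finset.sum_mul]
              apply Finset.sum_congr rfl
              intro t _
              have := hc t s
              simp only [grad] at this
              rw [mul_assoc, this]; ring
          _ = _ := by rw [hG]; ring
      set g : S := C ((d : ℂ)⁻¹) * G with hg
      have hw' : ∀ s, w F A s = g * pderiv s f := by
        intro s
        have h1 : (C ((d : ℂ)⁻¹) : S) * (d : S) = 1 := by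
          rw [← map_natCast (C : ℂ →+* S) d, ← C_mul, inv_mul_cancel₀ hd0, C_1]
        rw [hg, mul_assoc, ← hw s, ← mul_assoc, h1, one_mul]
      -- extended coefficient vector
      set A' : Fin (n+1) → S := Fin.snoc (α := fun _ => S) (fun j => A (Sum.inl j)) 0 with hA'
      have hsum : ∀ s, ∑ j, (A' j - g) * (cop F j * pderiv s (F j))
          + f * (![0, A (Sum.inr 0), A (Sum.inr 1)] : Fin 3 → S) s = 0 := by
        intro s
        have h1 := hw' s
        rw [w_apply, pderiv_f] at h1
        rw [Fin.sum_univ_castSucc]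
        simp only [hA', Fin.snoc_castSucc, Fin.snoc_last, sub_mul, Finset.sum_sub_distrib]
        rw [← Finset.mul_sum]
        linear_combination h1
      have hdvd : ∀ j, F j ∣ A' j - g := by
        intro j
        apply dvd_of_grad _ _ (hsmooth j)
        intro s
        apply (hcop j).dvd_of_dvd_mul_left
        have h1 := hsum s
        rw [← Finset.add_sum_erase _ _ (Finset.mem_univ j)] at h1
        have h2 : F j ∣ ∑ i ∈ Finset.univ.erase j, (A' i - g) * (cop F i * pderiv s (F i)) := by
          apply Finset.dvd_sum
          intro i hi
          apply Dvd.dvd.mul_left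
          apply Dvd.dvd.mul_right
          apply Finset.dvd_prod_of_mem
          simp at hi ⊢
          exact fun h => hi h.symm
        have h3 : F j ∣ f * (![0, A (Sum.inr 0), A (Sum.inr 1)] : Fin 3 → S) s :=
          Dvd.dvd.mul_right (Finset.dvd_prod_of_mem _ (Finset.mem_univ j)) _
        have h4 : cop F j * ((A' j - g) * pderiv s (F j)) =
          - (∑ i ∈ Finset.univ.erase j, (A' i - g) * (cop F i * pderiv s (F i))
            + f * (![0, A (Sum.inr 0), A (Sum.inr 1)] : Fin 3 → S) s) := by
          linear_combination h1
        rw [h4, dvd_neg]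
        exact dvd_add h2 h3
      choose B hB using hdvd
      have hE : ∀ s, (![0, A (Sum.inr 0), A (Sum.inr 1)] : Fin 3 → S) s
          = - ∑ j, B j * pderiv s (F j) := by
        intro s
        apply mul_left_cancel₀ hf
        have h1 := hsum s
        have h2 : ∑ j, (A' j - g) * (cop F j * pderiv s (F j))
            = f * ∑ j, B j * pderiv s (F j) := by
          rw [Finset.mul_sum]
          apply Finset.sum_congr rfl
          intro j _
          rw [hB, hfdef, ← mul_cop F j]; ring
        rw [h2] at h1
        linear_combination h1
      simp only [Fin.sum_univ_succ (n := n), hF0] at hE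
      have hE0 := hE 0
      have hE1 := hE 1
      have hE2 := hE 2
      simp [pderiv_X] at hE0 hE1 hE2
      have hB0 : B 0 = - ∑ a : Fin n, B a.succ * pderiv 0 (F a.succ) := by
        linear_combination hE0
      have hgl : g = - (F (Fin.last n) * B (Fin.last n)) := by
        have := hB (Fin.last n)
        simp only [hA', Fin.snoc_last] at this
        linear_combination -this
      have : A = ∑ a : Fin n, B a.succ • Rn F a := by
        ext1 i
        rcases i with k | t
        · rw [R_inl F hn hF0 B hB0 k]
          have := hB k.castSucc
          simp only [hA', Fin.snoc_castSucc] at this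
          linear_combination this + hgl
        · rw [R_inr]
          fin_cases t
          · simpa using hE1
          · simpa using hE2
      rw [this]
      exact Submodule.sum_mem _ fun a _ =>
        Submodule.smul_mem _ _ (Submodule.subset_span ⟨a, rfl⟩)
    · intro h
      obtain ⟨c, rfl⟩ := (Submodule.mem_span_range_iff_exists_fun S).1 h
      have := w_R F hn hF0 (Fin.cons (α := fun _ => S)
        (- ∑ a : Fin n, c a * pderiv 0 (F a.succ)) c) (by simp)
      simp only [Fin.cons_succ] at this
      rw [this, map_smul, cross_self, smul_zero]
  · rw [Fintype.linearIndependent_iff]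
    intro c hc
    set B : Fin (n+1) → S := Fin.cons (α := fun _ => S)
        (- ∑ a : Fin n, c a * pderiv 0 (F a.succ)) c with hBd
    have hB : B 0 = - ∑ a : Fin n, B a.succ * pderiv 0 (F a.succ) := by simp [hBd]
    have hc' : ∑ a : Fin n, B a.succ • Rn F a = 0 := by simpa [hBd] using hc
    have h1 := R_inl F hn hF0 B hB
    have h2 := R_inr F B
    have h3 := vec_R F hF0 B hB 0 (fun t => by rw [← h2 t, hc'])
    rw [hc'] at h1 h2
    set h := F (Fin.last n) * B (Fin.last n) with hh
    have h4 : ∀ j, F j * B j = h := by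
      intro j
      induction j using Fin.lastCases with
      | last => rfl
      | cast k => have := h1 k; simp at this; linear_combination -this
    have h5 : ∑ t : Fin 3, X t * ∑ j, B j * pderiv t (F j) = 0 := by
      apply Finset.sum_eq_zero
      intro t _
      have := h3 t
      have h0 : (![0, (0 : Fin n ⊕ Fin 2 → S) (Sum.inr 0), (0 : Fin n ⊕ Fin 2 → S) (Sum.inr 1)]
        : Fin 3 → S) t = 0 := by fin_cases t <;> simp
      rw [h0] at this
      rw [neg_eq_zero.1 this.symm, mul_zero]
    have h6 : ∑ t : Fin 3, X t * ∑ j, B j * pderiv t (F j) = ((∑ j, e j : ℕ) : S) * h := by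
      simp only [Finset.mul_sum]
      rw [Finset.sum_comm, Nat.cast_sum, Finset.sum_mul]
      apply Finset.sum_congr rfl
      intro j _
      rw [← h4 j]
      calc _ = B j * ∑ t : Fin 3, X t * pderiv t (F j) := by
            rw [Finset.mul_sum]; apply Finset.sum_congr rfl; intros; ring
        _ = _ := by rw [euler]; ring
    have h7 : h = 0 := by
      rw [h6] at h5
      rcases mul_eq_zero.1 h5 with h | h
      · exfalso
        have h8 : (∑ i, e i) = 0 := by exact_mod_cast h
        have := (he 0).trans (Finset.single_le_sum (f := e) (by simp) (Finset.mem_univ 0))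
        omega
      · exact h
    intro a
    have := h4 a.succ
    rw [h7, mul_eq_zero, or_iff_right (hF _)] at this
    simpa [hBd] using this

end KL1

/-- if `ℓ(C) = 1` with `f_1 = x`, the kernel of
`φ : S^{m+1} → S³`, `φ(A_1,…,A_{m−1},b,c) = Σ A_j ρ_j + b σ^y + c σ^z`,
is the free `S`-module with basis `R_2, …, R_m`. -/
theorem kernel_caseL1
    (m : ℕ) (hm : 4 ≤ m) (F : Fin m → S) (e : Fin m → ℕ)
    (he : ∀ j, 1 ≤ e j)
    (hhom : ∀ j, (F j).IsHomogeneous (e j))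
    (hsmooth : ∀ j, ∀ p : Fin 3 → ℂ,
      (∀ t, eval p (pderiv t (F j)) = 0) → p = 0)
    (hnc : ∀ i j : Fin m, i ≠ j → ∀ p : Fin 3 → ℂ, p ≠ 0 →
      eval p (F i) = 0 → eval p (F j) = 0 →
      LinearIndependent ℂ
        ![fun t => eval p (pderiv t (F i)), fun t => eval p (pderiv t (F j))])
    (htriple : ∀ i j k : Fin m, i ≠ j → i ≠ k → j ≠ k → ∀ p : Fin 3 → ℂ, p ≠ 0 →
      ¬(eval p (F i) = 0 ∧ eval p (F j) = 0 ∧ eval p (F k) = 0))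
    (hF1 : F ⟨0, by omega⟩ = X 0) (he1 : e ⟨0, by omega⟩ = 1)
    (hl1 : ∀ j : Fin m, 1 ≤ (j : ℕ) → 2 ≤ e j) :
    {A : (Fin (m - 1) ⊕ Fin 2) → S |
        (∑ j : Fin (m - 1), A (Sum.inl j) • rho F (Fin.castLE (Nat.sub_le m 1) j))
          + A (Sum.inr 0) • sigy (∏ i, F i) + A (Sum.inr 1) • sigz (∏ i, F i) = 0}
      = (Submodule.span S (Set.range (Rvec1 F)) : Set ((Fin (m - 1) ⊕ Fin 2) → S)) ∧
    LinearIndependent S (Rvec1 F) := by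
  obtain ⟨n, rfl⟩ : ∃ n, m = n + 1 := ⟨m - 1, by omega⟩
  exact KL1.main F e (by omega) he hhom hsmooth hnc hF1
end
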